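/- Fix γ with 0 < γ < 1. Then Σ_{p ≤ x} ((p+1)^γ − p^γ) = x^γ/log x + O(x^γ/(log x)^2) as x → ∞, where the sum is over primes p ≤ x. -/

import Mathlib

open Finset

/-!
By the 3-4-1 inequality and the growth bounds `ζ(s), ζ'(s) = O(|Im s| ^ ε)`, the zeta function is
bounded below by a small negative power of `|Im s|` slightly to the left of the line `Re s = 1`, so
Cauchy's estimates bound every derivative of `-ζ'(s) / (s ζ(s)) - 1 / (s - 1)` on `1 ≤ Re s ≤ 2`.
Up to sign the `k`-th derivative is the Mellin transform of `(log u) ^ k * (ψ(u) - u)`; by Fourier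
inversion, smooth averages of this function over windows of length `1 / l` in `log u` are bounded
independently of `l`. Since `ψ` is monotone, `l = (log x) ^ A` and `k = 2 * A` give
`ψ(x) = x + O(x / (log x) ^ A)`, and hence `π(x) = x / log x + O(x / (log x) ^ 2)`. Summation by
parts and `(u + 1) ^ γ - u ^ γ = γ u ^ (γ - 1) + O(u ^ (γ - 2))` then reduce the sum over primes to
`γ x ^ γ / log x - γ (γ - 1) ∫ u ^ (γ - 1) / log u`, which is `x ^ γ / log x` up to the error.
-/

section ZetaContinuation

open Filter Topology MeasureTheory

/-- The error `n⁻ˢ - ∫ u⁻ˢ du`, over `[n, n + 1]`, of a left Riemann sum for the zeta integral. Its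
sum over `n` converges for `0 < Re s`, which continues the zeta function to that half-plane. -/
noncomputable def zetaTerm (n : ℕ) (s : ℂ) : ℂ :=
  ∫ u in (n : ℝ)..n + 1, ((n : ℂ) ^ (-s) - (u : ℂ) ^ (-s))

lemma norm_cpow_neg_sub_cpow_neg_le {s : ℂ} (hs : 0 < s.re) {a u : ℝ} (ha : 0 < a)
    (hu : u ∈ Set.Icc a (a + 1)) :
    ‖(a : ℂ) ^ (-s) - (u : ℂ) ^ (-s)‖ ≤ ‖s‖ * a ^ (-s.re - 1) := by
  have hs0 : -s ≠ 0 := neg_ne_zero.2 fun h => by simp [h] at hs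
  have hderiv : ∀ v ∈ Set.Icc a (a + 1),
      ‖-s * (v : ℂ) ^ (-s - 1)‖ ≤ ‖s‖ * a ^ (-s.re - 1) := fun v hv => by
    rw [norm_mul, norm_neg, Complex.norm_cpow_eq_rpow_re_of_pos (ha.trans_le hv.1)]
    gcongr
    exact Real.rpow_le_rpow_of_nonpos ha hv.1 (by simp; linarith)
  have hmv := Convex.norm_image_sub_le_of_norm_hasDerivWithin_le (𝕜 := ℝ)
    (f := fun v : ℝ => (v : ℂ) ^ (-s))
    (fun v hv => (hasDerivAt_ofReal_cpow_const (ha.trans_le hv.1).ne' hs0).hasDerivWithinAt)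
    hderiv (convex_Icc a (a + 1)) (Set.left_mem_Icc.2 (by linarith)) hu
  rw [norm_sub_rev]
  refine hmv.trans (mul_le_of_le_one_right (by positivity) ?_)
  rw [Real.norm_of_nonneg (by linarith [hu.1])]
  linarith [hu.2]

lemma norm_zetaTerm_le {s : ℂ} (hs : 0 < s.re) {n : ℕ} (hn : 0 < n) :
    ‖zetaTerm n s‖ ≤ ‖s‖ * (n : ℝ) ^ (-s.re - 1) := by
  have hn' : (0 : ℝ) < n := by exact_mod_cast hn
  simpa [zetaTerm] using intervalIntegral.norm_integral_le_of_norm_le_const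
    (a := (n : ℝ)) (b := n + 1) (f := fun u : ℝ => (n : ℂ) ^ (-s) - (u : ℂ) ^ (-s))
    fun u hu => by
      rw [Set.uIoc_of_le (by linarith)] at hu
      exact_mod_cast norm_cpow_neg_sub_cpow_neg_le hs hn' (Set.Ioc_subset_Icc_self hu)

lemma intervalIntegrable_ofReal_cpow {s : ℂ} {a b : ℝ} (ha : 0 < a) (hb : 0 < b) :
    IntervalIntegrable (fun u : ℝ => (u : ℂ) ^ s) volume a b :=
  intervalIntegral.intervalIntegrable_cpow
    (Or.inr fun h => by rcases Set.mem_uIcc.1 h with h | h <;> linarith [h.1, h.2])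

lemma zetaTerm_eq_sub_integral {n : ℕ} (hn : 0 < n) (s : ℂ) :
    zetaTerm n s = (n : ℂ) ^ (-s) - ∫ u in (n : ℝ)..n + 1, (u : ℂ) ^ (-s) := by
  have hn' : (0 : ℝ) < n := by exact_mod_cast hn
  rw [zetaTerm, intervalIntegral.integral_sub intervalIntegrable_const
    (intervalIntegrable_ofReal_cpow hn' (by linarith))]
  simp

lemma integral_ofReal_cpow_neg {s : ℂ} (hs1 : s ≠ 1) {a b : ℝ} (ha : 0 < a) (hb : 0 < b) :
    ∫ u in a..b, (u : ℂ) ^ (-s) = ((b : ℂ) ^ (1 - s) - (a : ℂ) ^ (1 - s)) / (1 - s) := by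
  rw [integral_cpow (Or.inr ⟨fun h => hs1 (neg_injective h), fun h => by
    rcases Set.mem_uIcc.1 h with h | h <;> linarith [h.1, h.2]⟩), neg_add_eq_sub]

lemma differentiableAt_zetaTerm {n : ℕ} (hn : 0 < n) {s : ℂ} (hs1 : s ≠ 1) :
    DifferentiableAt ℂ (zetaTerm n) s := by
  have hn' : (0 : ℝ) < n := by exact_mod_cast hn
  have h0 : ((n : ℝ) : ℂ) ≠ 0 := by exact_mod_cast hn'.ne'
  have h1 : ((n + 1 : ℝ) : ℂ) ≠ 0 := by exact_mod_cast (by linarith : (n : ℝ) + 1 ≠ 0)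
  have heq : zetaTerm n =ᶠ[𝓝 s] fun z => ((n : ℝ) : ℂ) ^ (-z) -
      (((n + 1 : ℝ) : ℂ) ^ (1 - z) - ((n : ℝ) : ℂ) ^ (1 - z)) / (1 - z) := by
    filter_upwards [isOpen_ne.mem_nhds hs1] with z hz
    rw [zetaTerm_eq_sub_integral hn, integral_ofReal_cpow_neg hz hn' (by linarith),
      Complex.ofReal_natCast]
  refine DifferentiableAt.congr_of_eventuallyEq ?_ heq
  exact (DifferentiableAt.const_cpow (by fun_prop) (Or.inl h0)).sub
    (((DifferentiableAt.const_cpow (by fun_prop) (Or.inl h1)).sub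
      (DifferentiableAt.const_cpow (by fun_prop) (Or.inl h0))).div (by fun_prop)
      (sub_ne_zero.2 hs1.symm))

lemma summable_natCast_add_rpow {p : ℝ} (hp : p < -1) (N : ℕ) :
    Summable fun k : ℕ => ((N + k : ℕ) : ℝ) ^ p := by
  simpa only [add_comm N] using (summable_nat_add_iff N).2 (Real.summable_nat_rpow.2 hp)

lemma summable_zetaTerm {s : ℂ} (hs : 0 < s.re) {N : ℕ} (hN : 0 < N) :
    Summable fun k : ℕ => zetaTerm (N + k) s :=
  Summable.of_norm_bounded ((summable_natCast_add_rpow (by linarith) N).mul_left ‖s‖)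
    fun k => norm_zetaTerm_le hs (by omega)

lemma differentiableAt_tsum_zetaTerm {N : ℕ} (hN : 0 < N) {s : ℂ} (hs : 0 < s.re) (hs1 : s ≠ 1) :
    DifferentiableAt ℂ (fun s => ∑' k : ℕ, zetaTerm (N + k) s) s := by
  let U : Set ℂ := {z | s.re / 2 < z.re ∧ z ≠ 1 ∧ ‖z‖ < ‖s‖ + 1}
  have hU : IsOpen U := (isOpen_lt continuous_const Complex.continuous_re).inter
    (isOpen_ne.inter (isOpen_lt continuous_norm continuous_const))
  have hsU : s ∈ U := ⟨by linarith, hs1, by linarith⟩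
  refine (Complex.differentiableOn_tsum_of_summable_norm
    ((summable_natCast_add_rpow (p := -(s.re / 2) - 1) (by linarith) N).mul_left (‖s‖ + 1))
    (fun k z hz => (differentiableAt_zetaTerm (by omega) hz.2.1).differentiableWithinAt)
    hU fun k z hz => ?_).differentiableAt (hU.mem_nhds hsU)
  have hNk : 1 ≤ N + k := by omega
  refine (norm_zetaTerm_le (by linarith [hz.1]) hNk).trans ?_
  gcongr
  · exact hz.2.2.le
  · exact_mod_cast hNk
  · exact hz.1.le

lemma sum_range_add_eq_add_zetaTerm {N : ℕ} (hN : 0 < N) (s : ℂ) (K : ℕ) :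
    ∑ n ∈ range (N + K), (n : ℂ) ^ (-s) = ∑ n ∈ range N, (n : ℂ) ^ (-s) +
      (∫ u in (N : ℝ)..(N + K : ℕ), (u : ℂ) ^ (-s)) + ∑ k ∈ range K, zetaTerm (N + k) s := by
  have hadj := intervalIntegral.sum_integral_adjacent_intervals (μ := volume) (n := K)
    (f := fun u : ℝ => (u : ℂ) ^ (-s)) (a := fun k => ((N + k : ℕ) : ℝ)) fun k _ =>
      intervalIntegrable_ofReal_cpow (by positivity) (by positivity)
  simp only [add_zero, ← add_assoc, Nat.cast_succ] at hadj
  rw [sum_congr rfl fun k _ => zetaTerm_eq_sub_integral (by omega : 0 < N + k) s,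
    sum_sub_distrib, sum_range_add, hadj]
  ring

lemma riemannZeta_eq_sum_add_tsum_of_one_lt_re {s : ℂ} (hs : 1 < s.re) {N : ℕ} (hN : 0 < N) :
    riemannZeta s = ∑ n ∈ range N, (n : ℂ) ^ (-s) + (N : ℂ) ^ (1 - s) / (s - 1) +
      ∑' k : ℕ, zetaTerm (N + k) s := by
  have hN' : (0 : ℝ) < N := by exact_mod_cast hN
  have hcast : Tendsto (fun K : ℕ => N + K) atTop atTop :=
    tendsto_atTop_mono (fun K => Nat.le_add_left K N) tendsto_id
  have hzeta : HasSum (fun n : ℕ => (n : ℂ) ^ (-s)) (riemannZeta s) := by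
    simpa only [zeta_eq_tsum_one_div_nat_cpow hs, Complex.cpow_neg, one_div] using
      (Complex.summable_one_div_nat_cpow.2 hs).hasSum
  have hint : ∫ u in Set.Ioi (N : ℝ), (u : ℂ) ^ (-s) = (N : ℂ) ^ (1 - s) / (s - 1) := by
    rw [integral_Ioi_cpow_of_lt (by simpa using hs) hN', neg_add_eq_sub, ← neg_sub s 1,
      neg_div_neg_eq, Complex.ofReal_natCast, neg_sub]
  have hlim : Tendsto (fun K : ℕ => ∫ u in (N : ℝ)..(N + K : ℕ), (u : ℂ) ^ (-s)) atTop
      (𝓝 ((N : ℂ) ^ (1 - s) / (s - 1))) :=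
    hint ▸ intervalIntegral_tendsto_integral_Ioi _
      (integrableOn_Ioi_cpow_of_lt (by simpa using hs) hN')
      (tendsto_natCast_atTop_atTop.comp hcast)
  refine tendsto_nhds_unique (hzeta.tendsto_sum_nat.comp hcast) ?_
  exact ((tendsto_const_nhds.add hlim).add
    (summable_zetaTerm (by linarith) hN).hasSum.tendsto_sum_nat).congr
      fun K => (sum_range_add_eq_add_zetaTerm hN s K).symm

lemma riemannZeta_eq_sum_add_tsum {s : ℂ} (hs : 0 < s.re) (him : s.im ≠ 0) {N : ℕ} (hN : 0 < N) :
    riemannZeta s = ∑ n ∈ range N, (n : ℂ) ^ (-s) + (N : ℂ) ^ (1 - s) / (s - 1) +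
      ∑' k : ℕ, zetaTerm (N + k) s := by
  -- A convex domain containing `s`, meeting `1 < Re z` and avoiding the pole.
  let U : Set ℂ := {z | 0 < z.re} ∩ {z | 0 < s.im * z.im}
  have hUo : IsOpen U := (isOpen_lt continuous_const Complex.continuous_re).inter
    (isOpen_lt continuous_const (continuous_const.mul Complex.continuous_im))
  have hUc : Convex ℝ U := (convex_halfSpace_re_gt 0).inter
    (convex_halfSpace_gt (s.im • Complex.imLm).isLinear 0)
  have hU1 : ∀ z ∈ U, z ≠ 1 := by
    rintro z hz rfl
    simpa using hz.2
  have hN0 : (N : ℂ) ≠ 0 := by exact_mod_cast hN.ne'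
  have hU0 : ∀ z ∈ U, -z ≠ 0 := fun z hz h => by
    simpa [neg_eq_zero.1 h] using hz.1
  have hzeta : DifferentiableOn ℂ riemannZeta U := fun z hz =>
    (differentiableAt_riemannZeta (hU1 z hz)).differentiableWithinAt
  have hright : DifferentiableOn ℂ (fun s => ∑ n ∈ range N, (n : ℂ) ^ (-s) +
      (N : ℂ) ^ (1 - s) / (s - 1) + ∑' k : ℕ, zetaTerm (N + k) s) U := by
    refine (DifferentiableOn.add ?_ ?_).add fun z hz =>
      (differentiableAt_tsum_zetaTerm hN hz.1 (hU1 z hz)).differentiableWithinAt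
    · exact DifferentiableOn.fun_sum fun n _ z hz =>
        DifferentiableWithinAt.const_cpow (by fun_prop) (Or.inr (hU0 z hz))
    · exact DifferentiableOn.div (DifferentiableOn.const_cpow (by fun_prop) (Or.inl hN0))
        (by fun_prop) fun z hz => sub_ne_zero.2 (hU1 z hz)
  have hsU : s ∈ U := ⟨hs, mul_self_pos.2 him⟩
  have hsU' : s + 2 ∈ U := ⟨by simp; linarith, by simpa using mul_self_pos.2 him⟩
  refine (hzeta.analyticOnNhd hUo).eqOn_of_preconnected_of_eventuallyEq (hright.analyticOnNhd hUo)
    hUc.isPreconnected hsU' ?_ hsU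
  filter_upwards [(isOpen_lt continuous_const Complex.continuous_re).mem_nhds
    (show (1 : ℝ) < (s + 2).re by simp; linarith)] with z hz
  exact riemannZeta_eq_sum_add_tsum_of_one_lt_re hz hN

end ZetaContinuation

section ZetaBounds

lemma norm_sum_natCast_cpow_neg_le {s : ℂ} {η : ℝ} (hη : 0 < η) (hη1 : η < 1) (hs : 1 - η ≤ s.re)
    (N : ℕ) : ‖∑ n ∈ range N, (n : ℂ) ^ (-s)‖ ≤
      (N : ℝ) ^ (2 * η) * ∑' n : ℕ, (n : ℝ) ^ (-(1 + η)) := by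
  have hs0 : s ≠ 0 := by
    rintro rfl
    rw [Complex.zero_re] at hs
    linarith
  have hterm : ∀ n ∈ range N, ‖(n : ℂ) ^ (-s)‖ ≤ (N : ℝ) ^ (2 * η) * (n : ℝ) ^ (-(1 + η)) := by
    intro n hn
    obtain rfl | hn0 := n.eq_zero_or_pos
    · rw [Nat.cast_zero, Complex.zero_cpow (neg_ne_zero.2 hs0), norm_zero]
      positivity
    have hn1 : (1 : ℝ) ≤ n := by exact_mod_cast hn0
    have hnN : (n : ℝ) ≤ N := by exact_mod_cast (mem_range.1 hn).le
    calc ‖(n : ℂ) ^ (-s)‖ = (n : ℝ) ^ (-s.re) := by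
          rw [Complex.norm_natCast_cpow_of_pos hn0, Complex.neg_re]
      _ ≤ (n : ℝ) ^ (2 * η + -(1 + η)) := Real.rpow_le_rpow_of_exponent_le hn1 (by linarith)
      _ = (n : ℝ) ^ (2 * η) * (n : ℝ) ^ (-(1 + η)) := Real.rpow_add (by linarith) _ _
      _ ≤ _ := by gcongr
  refine (norm_sum_le_of_le _ hterm).trans ?_
  rw [← mul_sum]
  gcongr
  exact (Real.summable_nat_rpow.2 (by linarith)).sum_le_tsum _ fun n _ => by positivity

lemma norm_tsum_zetaTerm_le {s : ℂ} {η : ℝ} (hη : 0 < η) (hη2 : η ≤ 1 / 2) (hs : 1 - η ≤ s.re)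
    {N : ℕ} (hN : 0 < N) : ‖∑' k : ℕ, zetaTerm (N + k) s‖ ≤
      ‖s‖ * (N : ℝ) ^ (2 * η - 1) * ∑' n : ℕ, (n : ℝ) ^ (-(1 + η)) := by
  have hsum : Summable fun n : ℕ => (n : ℝ) ^ (-(1 + η)) := Real.summable_nat_rpow.2 (by linarith)
  have htail : Summable fun k : ℕ => ((N + k : ℕ) : ℝ) ^ (-(1 + η)) :=
    summable_natCast_add_rpow (by linarith) N
  have hle : ∑' k : ℕ, ((N + k : ℕ) : ℝ) ^ (-(1 + η)) ≤ ∑' n : ℕ, (n : ℝ) ^ (-(1 + η)) := by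
    simp only [add_comm N, ← hsum.sum_add_tsum_nat_add N]
    exact le_add_of_nonneg_left (sum_nonneg fun _ _ => by positivity)
  have hterm : ∀ k : ℕ, ‖zetaTerm (N + k) s‖ ≤
      ‖s‖ * (N : ℝ) ^ (2 * η - 1) * ((N + k : ℕ) : ℝ) ^ (-(1 + η)) := by
    intro k
    have hNk : (1 : ℝ) ≤ (N + k : ℕ) := by exact_mod_cast (by omega)
    refine (norm_zetaTerm_le (by linarith) (by omega)).trans ?_
    rw [mul_assoc]
    gcongr
    calc ((N + k : ℕ) : ℝ) ^ (-s.re - 1) ≤ ((N + k : ℕ) : ℝ) ^ ((2 * η - 1) + -(1 + η)) :=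
          Real.rpow_le_rpow_of_exponent_le hNk (by linarith)
      _ = ((N + k : ℕ) : ℝ) ^ (2 * η - 1) * ((N + k : ℕ) : ℝ) ^ (-(1 + η)) :=
          Real.rpow_add (by linarith) _ _
      _ ≤ _ := by
          gcongr ?_ * _
          exact Real.rpow_le_rpow_of_nonpos (by exact_mod_cast hN)
            (by exact_mod_cast Nat.le_add_right N k) (by linarith)
  refine (tsum_of_norm_bounded (htail.mul_left _).hasSum hterm).trans ?_
  rw [tsum_mul_left]
  gcongr

lemma abs_re_sub_le_and_abs_abs_im_sub_le {z s : ℂ} {r : ℝ} (hz : z ∈ Metric.closedBall s r) :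
    |z.re - s.re| ≤ r ∧ |(|z.im| - |s.im|)| ≤ r := by
  rw [mem_closedBall_iff_norm] at hz
  exact ⟨(Complex.abs_re_le_norm (z - s)).trans hz,
    (abs_abs_sub_abs_le z.im s.im).trans ((Complex.abs_im_le_norm (z - s)).trans hz)⟩

variable {ε : ℝ}

lemma norm_riemannZeta_le_of_abs_im_le (hε : 0 < ε) (hε1 : ε ≤ 1) {s : ℂ} (hre : 1 - ε / 2 ≤ s.re)
    (hre5 : s.re ≤ 5) (him : 1 / 2 ≤ |s.im|) {N : ℕ} (hN : |s.im| ≤ N) :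
    ‖riemannZeta s‖ ≤ (2 + 12 * ∑' n : ℕ, (n : ℝ) ^ (-(1 + ε / 2))) * (N : ℝ) ^ ε := by
  set Z : ℝ := ∑' n : ℕ, (n : ℝ) ^ (-(1 + ε / 2))
  have : 0 ≤ Z := tsum_nonneg fun _ => by positivity
  have hN0 : 0 < N := by exact_mod_cast (by linarith : (0 : ℝ) < N)
  have hN1 : (1 : ℝ) ≤ N := by exact_mod_cast hN0
  have hε2 : 2 * (ε / 2) = ε := mul_div_cancel₀ _ two_ne_zero
  have hsum : ‖∑ n ∈ range N, (n : ℂ) ^ (-s)‖ ≤ (N : ℝ) ^ ε * Z := by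
    have h := norm_sum_natCast_cpow_neg_le (half_pos hε) (by linarith) hre N
    rwa [hε2] at h
  have hpole : ‖(N : ℂ) ^ (1 - s) / (s - 1)‖ ≤ (N : ℝ) ^ ε * 2 := by
    have hs1 : 1 / 2 ≤ ‖s - 1‖ := him.trans (by simpa using Complex.abs_im_le_norm (s - 1))
    rw [norm_div, Complex.norm_natCast_cpow_of_pos hN0, div_le_iff₀ (by linarith)]
    calc (N : ℝ) ^ (1 - s).re ≤ (N : ℝ) ^ ε :=
          Real.rpow_le_rpow_of_exponent_le hN1 (by simp; linarith)
      _ = (N : ℝ) ^ ε * 2 * (1 / 2) := by ring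
      _ ≤ _ := by gcongr
  have htail : ‖∑' k : ℕ, zetaTerm (N + k) s‖ ≤ (N : ℝ) ^ ε * (11 * Z) := by
    have hs : ‖s‖ ≤ 11 * N := by
      refine (Complex.norm_le_abs_re_add_abs_im s).trans ?_
      rw [abs_of_nonneg (by linarith : 0 ≤ s.re)]
      linarith
    have h := norm_tsum_zetaTerm_le (half_pos hε) (by linarith) hre hN0
    rw [hε2] at h
    calc _ ≤ ‖s‖ * (N : ℝ) ^ (ε - 1) * Z := h
      _ ≤ 11 * N * (N : ℝ) ^ (ε - 1) * Z := by gcongr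
      _ = _ := by
        rw [Real.rpow_sub_one (by linarith)]
        field_simp
  rw [riemannZeta_eq_sum_add_tsum (by linarith) (abs_pos.1 (by linarith)) hN0]
  calc _ ≤ (N : ℝ) ^ ε * Z + (N : ℝ) ^ ε * 2 + (N : ℝ) ^ ε * (11 * Z) :=
        norm_add₃_le.trans (by gcongr)
    _ = _ := by ring

lemma exists_norm_riemannZeta_le (hε : 0 < ε) (hε1 : ε ≤ 1) : ∃ C : ℝ, 0 < C ∧ ∀ s : ℂ,
    1 - ε / 2 ≤ s.re → s.re ≤ 5 → 1 / 2 ≤ |s.im| → ‖riemannZeta s‖ ≤ C * |s.im| ^ ε := by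
  have : 0 ≤ ∑' n : ℕ, (n : ℝ) ^ (-(1 + ε / 2)) := tsum_nonneg fun _ => by positivity
  refine ⟨(2 + 12 * ∑' n : ℕ, (n : ℝ) ^ (-(1 + ε / 2))) * 3 ^ ε, by positivity,
    fun s hre hre5 him => ?_⟩
  have hceil : (⌈|s.im|⌉₊ : ℝ) ≤ 3 * |s.im| := by
    linarith [Nat.ceil_lt_add_one (abs_nonneg s.im)]
  refine (norm_riemannZeta_le_of_abs_im_le hε hε1 hre hre5 him (Nat.le_ceil _)).trans ?_
  rw [mul_assoc _ (3 ^ ε), ← Real.mul_rpow (by norm_num) (abs_nonneg _)]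
  gcongr

lemma exists_norm_deriv_riemannZeta_le (hε : 0 < ε) (hε1 : ε ≤ 1) : ∃ C : ℝ, 0 < C ∧ ∀ s : ℂ,
    1 - ε / 4 ≤ s.re → s.re ≤ 4 → 1 ≤ |s.im| → ‖deriv riemannZeta s‖ ≤ C * |s.im| ^ ε := by
  obtain ⟨C, hC, hζ⟩ := exists_norm_riemannZeta_le hε hε1
  refine ⟨C * 2 ^ ε / (ε / 4), by positivity, fun s h1 h2 h3 => ?_⟩
  have hball : ∀ z ∈ Metric.closedBall s (ε / 4), 1 - ε / 2 ≤ z.re ∧ z.re ≤ 5 ∧ 1 / 2 ≤ |z.im| ∧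
      |z.im| ≤ 2 * |s.im| := by
    intro z hz
    obtain ⟨hre, him⟩ := abs_re_sub_le_and_abs_abs_im_sub_le hz
    rw [abs_le] at hre him
    refine ⟨?_, ?_, ?_, ?_⟩ <;> linarith
  have hd : DiffContOnCl ℂ riemannZeta (Metric.ball s (ε / 4)) := by
    refine DifferentiableOn.diffContOnCl fun z hz => ?_
    refine (differentiableAt_riemannZeta ?_).differentiableWithinAt
    rintro rfl
    have := (hball 1 (Metric.closure_ball_subset_closedBall hz)).2.2.1
    norm_num at this
  refine (Complex.norm_deriv_le_of_forall_mem_sphere_norm_le (C := C * (2 * |s.im|) ^ ε)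
    (by positivity) hd fun z hz => ?_).trans (le_of_eq ?_)
  · obtain ⟨hre, hre', him, him'⟩ := hball z (Metric.sphere_subset_closedBall hz)
    exact (hζ z hre hre' him).trans (by gcongr)
  · rw [Real.mul_rpow (by norm_num) (abs_nonneg _)]
    ring

lemma exists_norm_riemannZeta_sub_le (hε : 0 < ε) (hε1 : ε ≤ 1) : ∃ C : ℝ, 0 < C ∧ ∀ z w : ℂ,
    z.im = w.im → 1 ≤ |w.im| → z.re ∈ Set.Icc (1 - ε / 4) 4 → w.re ∈ Set.Icc (1 - ε / 4) 4 →
      ‖riemannZeta z - riemannZeta w‖ ≤ C * |w.im| ^ ε * |z.re - w.re| := by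
  obtain ⟨C, hC, hζ'⟩ := exists_norm_deriv_riemannZeta_le hε hε1
  refine ⟨C, hC, fun z w hzw h1 hz hw => ?_⟩
  have hconv : Convex ℝ (Complex.imLm ⁻¹' {w.im} ∩ Complex.reLm ⁻¹' Set.Icc (1 - ε / 4) 4) :=
    ((convex_singleton _).linear_preimage _).inter ((convex_Icc _ _).linear_preimage _)
  have hle := hconv.norm_image_sub_le_of_norm_deriv_le (𝕜 := ℂ) (f := riemannZeta)
    (C := C * |w.im| ^ ε) (x := w) (y := z) (fun v hv => ?_) (fun v hv => ?_) ⟨rfl, hw⟩ ⟨hzw, hz⟩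
  · have hsub : z - w = (z.re - w.re : ℝ) := by apply Complex.ext <;> simp [hzw]
    rwa [hsub, Complex.norm_real, Real.norm_eq_abs] at hle
  · refine differentiableAt_riemannZeta ?_
    rintro rfl
    have him : (0 : ℝ) = w.im := hv.1
    norm_num [← him] at h1
  · have him : v.im = w.im := hv.1
    rw [← him]
    exact hζ' v hv.2.1 hv.2.2 (him ▸ h1)

lemma exists_norm_riemannZeta_one_add_le : ∃ A : ℝ, 0 < A ∧ ∀ x : ℝ, 0 < x → x ≤ 2 →
    ‖riemannZeta (1 + x)‖ ≤ A / x := by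
  have hc : ContinuousOn (fun x : ℝ => riemannZeta₁ (1 + x)) (Set.Icc 0 2) :=
    (differentiable_riemannZeta₁.continuous.comp (by fun_prop)).continuousOn
  obtain ⟨A, hA⟩ := isCompact_Icc.exists_bound_of_continuousOn hc
  refine ⟨max A 1, by positivity, fun x hx hx2 => ?_⟩
  have hx0 : (x : ℂ) ≠ 0 := by exact_mod_cast hx.ne'
  rw [riemannZeta_eq_inv_sub_mul (by simpa using hx0), norm_mul, norm_inv, add_sub_cancel_left,
    Complex.norm_real, Real.norm_of_nonneg hx.le, div_eq_inv_mul]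
  gcongr
  exact (hA x ⟨hx.le, hx2⟩).trans (le_max_left _ _)

lemma one_le_norm_riemannZeta_product {x : ℝ} (hx : 0 < x) (y : ℝ) :
    1 ≤ ‖riemannZeta (1 + x)‖ ^ 3 * ‖riemannZeta (1 + x + Complex.I * y)‖ ^ 4 *
      ‖riemannZeta (1 + x + 2 * Complex.I * y)‖ := by
  simpa [DirichletCharacter.LFunctionTrivChar, DirichletCharacter.LFunction_modOne_eq] using
    DirichletCharacter.norm_LFunction_product_ge_one (1 : DirichletCharacter ℂ 1) hx y

lemma exists_sub_one_pow_three_le (hε : 0 < ε) (hε1 : ε ≤ 1) : ∃ B : ℝ, 0 < B ∧ ∀ s : ℂ,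
    1 < s.re → s.re ≤ 3 → 1 ≤ |s.im| →
      (s.re - 1) ^ 3 ≤ B * |s.im| ^ ε * ‖riemannZeta s‖ ^ 4 := by
  obtain ⟨A, hA, hpole⟩ := exists_norm_riemannZeta_one_add_le
  obtain ⟨C, hC, hgrowth⟩ := exists_norm_riemannZeta_le hε hε1
  refine ⟨A ^ 3 * (C * 2 ^ ε), by positivity, fun s h1 h2 h3 => ?_⟩
  have hx : 0 < s.re - 1 := by linarith
  set w : ℂ := 1 + (s.re - 1 : ℝ) + 2 * Complex.I * s.im
  have hs : (1 : ℂ) + (s.re - 1 : ℝ) + Complex.I * s.im = s := by apply Complex.ext <;> simp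
  have hre : w.re = s.re := by simp [w]
  have him : |w.im| = 2 * |s.im| := by simp [w, abs_mul]
  have hw : ‖riemannZeta w‖ ≤ C * (2 ^ ε * |s.im| ^ ε) := by
    rw [← Real.mul_rpow (by norm_num) (abs_nonneg _), ← him]
    exact hgrowth w (by linarith) (by linarith) (by linarith)
  have hprod := one_le_norm_riemannZeta_product hx s.im
  rw [hs] at hprod
  calc (s.re - 1) ^ 3
      ≤ (s.re - 1) ^ 3 * (‖riemannZeta (1 + (s.re - 1 : ℝ))‖ ^ 3 * ‖riemannZeta s‖ ^ 4 *
          ‖riemannZeta w‖) := le_mul_of_one_le_right (by positivity) hprod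
    _ ≤ (s.re - 1) ^ 3 * ((A / (s.re - 1)) ^ 3 * ‖riemannZeta s‖ ^ 4 *
          (C * (2 ^ ε * |s.im| ^ ε))) := by
        gcongr
        exact hpole _ hx (by linarith)
    _ = _ := by
        field_simp

/- Writing the distance to the line `Re s = 1` as `e ^ 4 / (|Im s| ^ ε) ^ 5` keeps the fourth root
of the `3-4-1` inequality rational. -/
lemma exists_le_norm_riemannZeta_right (hε : 0 < ε) (hε1 : ε ≤ 1) : ∃ b : ℝ, 0 < b ∧
    ∀ e : ℝ, 0 < e → ∀ s : ℂ, 1 ≤ |s.im| → 1 + e ^ 4 / (|s.im| ^ ε) ^ 5 ≤ s.re → s.re ≤ 3 →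
      b * e ^ 3 / (|s.im| ^ ε) ^ 4 ≤ ‖riemannZeta s‖ := by
  obtain ⟨B, hB, h341⟩ := exists_sub_one_pow_three_le hε hε1
  refine ⟨(B⁻¹) ^ ((4 : ℕ) : ℝ)⁻¹, by positivity, fun e he s h1 h2 h3 => ?_⟩
  set T : ℝ := |s.im| ^ ε
  have hT : 0 < T := by positivity
  rw [← pow_le_pow_iff_left₀ (by positivity) (norm_nonneg _) four_ne_zero, div_pow, mul_pow,
    Real.rpow_inv_natCast_pow (by positivity) four_ne_zero]
  have hpos : 0 < e ^ 4 / T ^ 5 := by positivity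
  have hle : (e ^ 4 / T ^ 5) ^ 3 ≤ B * T * ‖riemannZeta s‖ ^ 4 :=
    le_trans (by gcongr; linarith) (h341 s (by linarith) h3 h1)
  calc B⁻¹ * (e ^ 3) ^ 4 / (T ^ 4) ^ 4 = (e ^ 4 / T ^ 5) ^ 3 / (B * T) := by field_simp
    _ ≤ ‖riemannZeta s‖ ^ 4 := by
        rw [div_le_iff₀ (by positivity)]
        linarith

lemma exists_le_norm_riemannZeta (hε : 0 < ε) (hε1 : ε ≤ 1) : ∃ c m : ℝ, 0 < c ∧ c ≤ ε / 4 ∧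
    0 < m ∧ ∀ s : ℂ, 1 ≤ |s.im| → 1 - c / (|s.im| ^ ε) ^ 5 ≤ s.re → s.re ≤ 3 →
      m / (|s.im| ^ ε) ^ 4 ≤ ‖riemannZeta s‖ := by
  obtain ⟨b, hb, hright⟩ := exists_le_norm_riemannZeta_right hε hε1
  obtain ⟨C, hC, hsub⟩ := exists_norm_riemannZeta_sub_le hε hε1
  set e : ℝ := min (ε / 4) (b / (4 * C))
  have he : 0 < e := by positivity
  have heε : e ≤ ε / 4 := min_le_left _ _
  have hCe : 4 * C * e ≤ b := by
    have := (le_div_iff₀ (by positivity)).1 (min_le_right (ε / 4) (b / (4 * C)))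
    linarith
  have he4 : e ^ 4 ≤ ε / 4 := (pow_le_of_le_one he.le (by linarith) four_ne_zero).trans heε
  refine ⟨e ^ 4, b * e ^ 3 / 2, by positivity, he4, by positivity, fun s h1 h2 h3 => ?_⟩
  set T : ℝ := |s.im| ^ ε
  have hT : 1 ≤ T := Real.one_le_rpow h1 hε.le
  set h : ℝ := e ^ 4 / T ^ 5
  have hh : h ≤ ε / 4 := (div_le_self (by positivity) (one_le_pow₀ hT)).trans he4
  have hh0 : 0 < h := by positivity
  by_cases hre : 1 + h ≤ s.re
  · refine le_trans ?_ (hright e he s h1 hre h3)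
    gcongr
    exact half_le_self (by positivity)
  push Not at hre
  -- Compare with the point `z` at the same height where the bound from the right applies.
  set z : ℂ := ⟨1 + h, s.im⟩
  have hz : b * e ^ 3 / T ^ 4 ≤ ‖riemannZeta z‖ :=
    hright e he z h1 le_rfl (by change 1 + h ≤ 3; linarith)
  have hzs : ‖riemannZeta z - riemannZeta s‖ ≤ b * e ^ 3 / 2 / T ^ 4 := by
    calc _ ≤ C * T * |(1 + h) - s.re| :=
          hsub z s rfl h1 ⟨by change _ ≤ 1 + h; linarith, by change 1 + h ≤ _; linarith⟩
            ⟨by linarith, by linarith⟩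
      _ ≤ C * T * (2 * h) := by
          gcongr
          exact abs_le.2 ⟨by linarith, by linarith⟩
      _ = (4 * C * e) * e ^ 3 / 2 / T ^ 4 := by
          simp only [h]
          field_simp
          ring
      _ ≤ _ := by gcongr
  have htri := norm_sub_norm_le (riemannZeta z) (riemannZeta s)
  have hhalf : b * e ^ 3 / T ^ 4 = b * e ^ 3 / 2 / T ^ 4 + b * e ^ 3 / 2 / T ^ 4 := by ring
  linarith

end ZetaBounds

section PsiTransform

open Topology

/-- The analytic continuation of `-ζ'(s) / (s ζ(s)) - 1 / (s - 1)`, the Mellin transform of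
`ψ(u) - u` at `-s`. Writing it with `riemannZeta₁ s = (s - 1) ζ(s)` makes it regular at `s = 1`. -/
noncomputable def psiTransform (s : ℂ) : ℂ := -(deriv riemannZeta₁ s / riemannZeta₁ s + 1) / s

lemma riemannZeta₁_eq {s : ℂ} (hs : s ≠ 1) : riemannZeta₁ s = (s - 1) * riemannZeta s := by
  rw [riemannZeta_eq_inv_sub_mul hs, mul_inv_cancel_left₀ (sub_ne_zero.2 hs)]

lemma deriv_riemannZeta₁_eq {s : ℂ} (hs : s ≠ 1) :
    deriv riemannZeta₁ s = riemannZeta s + (s - 1) * deriv riemannZeta s := by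
  have heq : riemannZeta₁ =ᶠ[𝓝 s] fun z => (z - 1) * riemannZeta z := by
    filter_upwards [isOpen_ne.mem_nhds hs] with z hz using riemannZeta₁_eq hz
  rw [heq.deriv_eq]
  simpa using
    (((hasDerivAt_id s).sub_const 1).fun_mul (differentiableAt_riemannZeta hs).hasDerivAt).deriv

lemma psiTransform_eq {s : ℂ} (hs1 : s ≠ 1) (hs0 : s ≠ 0) (hζ : riemannZeta s ≠ 0) :
    psiTransform s = -deriv riemannZeta s / riemannZeta s / s - 1 / (s - 1) := by
  have := sub_ne_zero.2 hs1
  rw [psiTransform, deriv_riemannZeta₁_eq hs1, riemannZeta₁_eq hs1]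
  field_simp
  ring

lemma analyticAt_psiTransform {s : ℂ} (hs0 : s ≠ 0) (hζ : riemannZeta₁ s ≠ 0) :
    AnalyticAt ℂ psiTransform s :=
  have h : AnalyticAt ℂ riemannZeta₁ s := differentiable_riemannZeta₁.analyticAt s
  (((h.deriv.div h hζ).add analyticAt_const).neg).div analyticAt_id hs0

lemma analyticAt_psiTransform_of_one_le_re {s : ℂ} (hs : 1 ≤ s.re) :
    AnalyticAt ℂ psiTransform s := by
  refine analyticAt_psiTransform (fun h => by norm_num [h] at hs) ?_
  by_cases hs1 : s = 1
  · simp [hs1]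
  · rw [riemannZeta₁_eq hs1]
    exact mul_ne_zero (sub_ne_zero.2 hs1) (riemannZeta_ne_zero_of_one_le_re hs)

lemma exists_norm_psiTransform_le {ε : ℝ} (hε : 0 < ε) (hε1 : ε ≤ 1) : ∃ c K : ℝ, 0 < c ∧
    c ≤ ε / 4 ∧ 0 < K ∧ ∀ s : ℂ, 1 ≤ |s.im| → 1 - c / (|s.im| ^ ε) ^ 5 ≤ s.re → s.re ≤ 3 →
      AnalyticAt ℂ psiTransform s ∧ ‖psiTransform s‖ ≤ K * (|s.im| ^ ε) ^ 5 / |s.im| := by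
  obtain ⟨c, m, hc, hcε, hm, hlow⟩ := exists_le_norm_riemannZeta hε hε1
  obtain ⟨C, hC, hderiv⟩ := exists_norm_deriv_riemannZeta_le hε hε1
  refine ⟨c, C / m + 1, hc, hcε, by positivity, fun s h1 h2 h3 => ?_⟩
  set T : ℝ := |s.im| ^ ε with hT_def
  have hT : 1 ≤ T := Real.one_le_rpow h1 hε.le
  have hlow_s := hlow s h1 h2 h3
  have hζ : riemannZeta s ≠ 0 := norm_pos_iff.1 (lt_of_lt_of_le (by positivity) hlow_s)
  have hs1 : s ≠ 1 := by rintro rfl; norm_num at h1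
  have hs0 : s ≠ 0 := by rintro rfl; norm_num at h1
  have hderiv_s := hderiv s (by linarith [div_le_self hc.le (one_le_pow₀ hT (n := 5))])
    (by linarith) h1
  rw [← hT_def] at hderiv_s
  have hζ₁ : riemannZeta₁ s ≠ 0 := riemannZeta₁_eq hs1 ▸ mul_ne_zero (sub_ne_zero.2 hs1) hζ
  refine ⟨analyticAt_psiTransform hs0 hζ₁, ?_⟩
  rw [psiTransform_eq hs1 hs0 hζ]
  calc ‖-deriv riemannZeta s / riemannZeta s / s - 1 / (s - 1)‖
      ≤ ‖deriv riemannZeta s‖ / ‖riemannZeta s‖ / ‖s‖ + 1 / ‖s - 1‖ := by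
        refine (norm_sub_le _ _).trans (le_of_eq ?_)
        simp only [norm_div, norm_neg, norm_one]
    _ ≤ (C * T) / (m / T ^ 4) / |s.im| + T ^ 5 / |s.im| := by
        gcongr
        · exact Complex.abs_im_le_norm s
        · exact one_le_pow₀ hT
        · simpa using Complex.abs_im_le_norm (s - 1)
    _ = _ := by field_simp

lemma exists_norm_psiTransform_le_on_closedBall {ε : ℝ} (hε : 0 < ε) (hε1 : ε ≤ 1) :
    ∃ c K : ℝ, 0 < c ∧ ∀ s : ℂ, 1 ≤ s.re → s.re ≤ 2 → 2 ≤ |s.im| →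
      ∀ z ∈ Metric.closedBall s (c / ((2 * |s.im|) ^ ε) ^ 5), AnalyticAt ℂ psiTransform z ∧
        ‖psiTransform z‖ ≤ K * ((2 * |s.im|) ^ ε) ^ 5 / |s.im| := by
  obtain ⟨c, K, hc, hcε, hK, hbound⟩ := exists_norm_psiTransform_le hε hε1
  refine ⟨c, 2 * K, hc, fun s h1 h2 h3 z hz => ?_⟩
  set W : ℝ := ((2 * |s.im|) ^ ε) ^ 5
  have hW : 1 ≤ W := one_le_pow₀ (Real.one_le_rpow (by linarith) hε.le)
  have hR : c / W ≤ ε / 4 := (div_le_self hc.le hW).trans hcε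
  obtain ⟨hre, him⟩ := abs_re_sub_le_and_abs_abs_im_sub_le hz
  rw [abs_le] at hre him
  have hz0 : 0 < |z.im| := by linarith
  have hzW : (|z.im| ^ ε) ^ 5 ≤ W := by
    simp only [W]
    gcongr
    linarith
  have hcW : c / W ≤ c / (|z.im| ^ ε) ^ 5 := by gcongr
  obtain ⟨han, hle⟩ := hbound z (by linarith) (by linarith) (by linarith)
  refine ⟨han, hle.trans ?_⟩
  calc K * (|z.im| ^ ε) ^ 5 / |z.im| ≤ K * W / (|s.im| / 2) := by
        gcongr
        linarith
    _ = _ := by field_simp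

lemma exists_norm_iteratedDeriv_psiTransform_le_of_two_le (k : ℕ) : ∃ C : ℝ, ∀ s : ℂ, 1 ≤ s.re →
    s.re ≤ 2 → 2 ≤ |s.im| → ‖iteratedDeriv k psiTransform s‖ ≤ C := by
  set ε : ℝ := 1 / (5 * (k + 1)) with hε_def
  have hε : 0 < ε := by positivity
  have hε1 : ε ≤ 1 := by
    rw [hε_def, div_le_one (by positivity)]
    linarith [(Nat.cast_nonneg k : (0 : ℝ) ≤ k)]
  obtain ⟨c, K, hc, hball⟩ := exists_norm_psiTransform_le_on_closedBall hε hε1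
  refine ⟨k.factorial * (2 * K) / c ^ k, fun s h1 h2 h3 => ?_⟩
  replace hball := hball s h1 h2 h3
  set W : ℝ := ((2 * |s.im|) ^ ε) ^ 5
  have hWk : W ^ (k + 1) = 2 * |s.im| := by
    rw [← pow_mul, ← Real.rpow_natCast, ← Real.rpow_mul (by positivity), hε_def]
    push_cast
    rw [one_div_mul_cancel (by positivity), Real.rpow_one]
  have hd : DiffContOnCl ℂ psiTransform (Metric.ball s (c / W)) :=
    DifferentiableOn.diffContOnCl fun z hz =>
      (hball z (Metric.closure_ball_subset_closedBall hz)).1.differentiableAt.differentiableWithinAt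
  refine (Complex.norm_iteratedDeriv_le_of_forall_mem_sphere_norm_le k (by positivity) hd
    fun z hz => (hball z (Metric.sphere_subset_closedBall hz)).2).trans (le_of_eq ?_)
  calc _ = k.factorial * K / c ^ k * (W ^ (k + 1) / |s.im|) := by
        rw [div_pow, pow_succ]
        field_simp
    _ = _ := by
        rw [hWk]
        field_simp

lemma exists_norm_iteratedDeriv_psiTransform_le (k : ℕ) : ∃ C : ℝ, ∀ s : ℂ, 1 ≤ s.re →
    s.re ≤ 2 → ‖iteratedDeriv k psiTransform s‖ ≤ C := by
  obtain ⟨C₁, hC₁⟩ := exists_norm_iteratedDeriv_psiTransform_le_of_two_le k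
  have hcont : ContinuousOn (iteratedDeriv k psiTransform)
      (Set.Icc (1 : ℝ) 2 ×ℂ Set.Icc (-2 : ℝ) 2) := fun z hz => by
    rw [iteratedDeriv_eq_iterate]
    exact ((analyticAt_psiTransform_of_one_le_re hz.1.1).iterated_deriv
      k).continuousAt.continuousWithinAt
  obtain ⟨C₂, hC₂⟩ :=
    (isCompact_Icc.reProdIm isCompact_Icc).exists_bound_of_continuousOn hcont
  refine ⟨max C₁ C₂, fun s h1 h2 => ?_⟩
  obtain h | h := le_total 2 |s.im|
  · exact (hC₁ s h1 h2 h).trans (le_max_left _ _)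
  · exact (hC₂ s ⟨⟨h1, h2⟩, abs_le.1 h⟩).trans (le_max_right _ _)

end PsiTransform

section MellinPsiError

open MeasureTheory Filter Asymptotics Topology

/-- The error `ψ(u) - u` weighted by `(log u) ^ k`, for `u > 1`; it is extended by zero so that its
Mellin transform is an integral over `(1, ∞)`. -/
noncomputable def logPowPsiError (k : ℕ) : ℝ → ℂ :=
  (Set.Ioi 1).indicator fun u => ((Real.log u ^ k * (Chebyshev.psi u - u) : ℝ) : ℂ)

lemma logPowPsiError_of_one_lt (k : ℕ) {u : ℝ} (hu : 1 < u) :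
    logPowPsiError k u = ((Real.log u ^ k * (Chebyshev.psi u - u) : ℝ) : ℂ) :=
  Set.indicator_of_mem (Set.mem_Ioi.2 hu) _

lemma logPowPsiError_of_le_one (k : ℕ) {u : ℝ} (hu : u ≤ 1) : logPowPsiError k u = 0 :=
  Set.indicator_of_notMem (Set.notMem_Ioi.2 hu) _

lemma logPowPsiError_succ (k : ℕ) :
    logPowPsiError (k + 1) = fun u => Real.log u • logPowPsiError k u := by
  ext u
  rcases lt_or_ge 1 u with hu | hu
  · simp only [logPowPsiError_of_one_lt _ hu, Complex.real_smul, ← Complex.ofReal_mul]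
    ring_nf
  · simp only [logPowPsiError_of_le_one _ hu, smul_zero]

lemma locallyIntegrableOn_logPowPsiError (k : ℕ) :
    LocallyIntegrableOn (logPowPsiError k) (Set.Ioi 0) := by
  have hpsi : LocallyIntegrable fun u : ℝ => Chebyshev.psi u - u :=
    Chebyshev.psi_mono.locallyIntegrable.sub continuous_id.locallyIntegrable
  have hlog : ContinuousOn (fun u => Real.log u ^ k) (Set.Ioi 0) :=
    (Real.continuousOn_log.mono fun u hu => (Set.mem_Ioi.1 hu).ne').pow k
  have hmul := (hpsi.locallyIntegrableOn (Set.Ioi 0)).continuousOn_mul hlog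
    isOpen_Ioi.isLocallyClosed
  intro u hu
  obtain ⟨t, ht, hint⟩ := hmul u hu
  exact ⟨t, ht, IntegrableOn.indicator hint.ofReal measurableSet_Ioi⟩

lemma abs_psi_sub_self_le {u : ℝ} (hu : 0 ≤ u) :
    |Chebyshev.psi u - u| ≤ (Real.log 4 + 4) * u := by
  have hle := Chebyshev.psi_le_const_mul_self hu
  have hnonneg := Chebyshev.psi_nonneg u
  have hlog : 0 ≤ Real.log 4 := Real.log_nonneg (by norm_num)
  rw [abs_le]
  constructor <;> nlinarith

lemma logPowPsiError_isBigO_atTop (k : ℕ) {a : ℝ} (ha : a < -1) :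
    logPowPsiError k =O[atTop] fun u : ℝ => u ^ (-a) := by
  have hlog : (fun u => Real.log u ^ k) =O[atTop] fun u : ℝ => u ^ (-1 - a) := by
    simpa only [Real.rpow_natCast] using
      (isLittleO_log_rpow_rpow_atTop k (show 0 < -1 - a by linarith)).isBigO
  have hpsi : (fun u => Chebyshev.psi u - u) =O[atTop] fun u : ℝ => u := by
    refine IsBigO.of_bound (Real.log 4 + 4) ?_
    filter_upwards [eventually_ge_atTop 0] with u hu
    simpa only [Real.norm_eq_abs, abs_of_nonneg hu] using abs_psi_sub_self_le hu
  have hreal : (fun u => Real.log u ^ k * (Chebyshev.psi u - u)) =O[atTop]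
      fun u : ℝ => u ^ (-a) := by
    refine (hlog.mul hpsi).congr' .rfl ?_
    filter_upwards [eventually_gt_atTop 0] with u hu
    rw [← Real.rpow_add_one hu.ne']
    ring_nf
  refine IsBigO.congr' (Complex.isBigO_ofReal_left.2 hreal) ?_ .rfl
  filter_upwards [eventually_gt_atTop 1] with u hu
  rw [logPowPsiError_of_one_lt k hu]

lemma logPowPsiError_isBigO_nhdsGT_zero (k : ℕ) (b : ℝ) :
    logPowPsiError k =O[𝓝[>] 0] fun u : ℝ => u ^ (-b) := by
  refine EventuallyEq.trans_isBigO ?_ (isBigO_zero _ _)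
  filter_upwards [mem_nhdsWithin_of_mem_nhds (Iio_mem_nhds one_pos)] with u hu
  exact logPowPsiError_of_le_one k (Set.mem_Iio.1 hu).le

lemma mellinConvergent_logPowPsiError (k : ℕ) {s : ℂ} (hs : 1 < s.re) :
    MellinConvergent (logPowPsiError k) (-s) := by
  obtain ⟨a, ha, ha'⟩ := exists_between (neg_lt_neg hs)
  exact mellinConvergent_of_isBigO_rpow (locallyIntegrableOn_logPowPsiError k)
    (logPowPsiError_isBigO_atTop k ha') (by simpa using ha)
    (logPowPsiError_isBigO_nhdsGT_zero k (-s.re - 1)) (by simp)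

lemma hasDerivAt_mellin_logPowPsiError_neg (k : ℕ) {s : ℂ} (hs : 1 < s.re) :
    HasDerivAt (fun z => mellin (logPowPsiError k) (-z))
      (-mellin (logPowPsiError (k + 1)) (-s)) s := by
  obtain ⟨a, ha, ha'⟩ := exists_between (neg_lt_neg hs)
  have hderiv := (mellin_hasDerivAt_of_isBigO_rpow (locallyIntegrableOn_logPowPsiError k)
    (logPowPsiError_isBigO_atTop k ha') (by simpa using ha)
    (logPowPsiError_isBigO_nhdsGT_zero k (-s.re - 1)) (s := -s) (by simp)).2
  rw [logPowPsiError_succ]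
  simpa only [mul_neg_one, Function.comp_def] using hderiv.comp s (hasDerivAt_neg s)

lemma neg_deriv_riemannZeta_div_eq_integral_psi {s : ℂ} (hs : 1 < s.re) :
    -deriv riemannZeta s / riemannZeta s =
      s * ∫ t in Set.Ioi (1 : ℝ), (Chebyshev.psi t : ℂ) * (t : ℂ) ^ (-(s + 1)) := by
  have hpsi (t : ℝ) : Chebyshev.psi t = ∑ k ∈ Icc 1 ⌊t⌋₊, ArithmeticFunction.vonMangoldt k := rfl
  have hO : (fun n : ℕ => ∑ k ∈ Icc 1 n, ArithmeticFunction.vonMangoldt k) =O[atTop]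
      fun n : ℕ => (n : ℝ) ^ (1 : ℝ) := by
    refine IsBigO.of_bound (Real.log 4 + 4) (Eventually.of_forall fun n => ?_)
    have h := Chebyshev.psi_le_const_mul_self (Nat.cast_nonneg n)
    have h' := Chebyshev.psi_nonneg n
    rw [hpsi, Nat.floor_natCast] at h h'
    rwa [Real.rpow_one, Real.norm_of_nonneg h', Real.norm_of_nonneg (Nat.cast_nonneg _)]
  rw [← ArithmeticFunction.LSeries_vonMangoldt_eq_deriv_riemannZeta_div hs,
    LSeries_eq_mul_integral_of_nonneg _ zero_le_one hs hO
      fun n => ArithmeticFunction.vonMangoldt_nonneg]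
  simp only [hpsi, Complex.ofReal_sum]

lemma cpow_smul_logPowPsiError_zero (s : ℂ) :
    (fun t : ℝ => (t : ℂ) ^ (-s - 1) • logPowPsiError 0 t) = (Set.Ioi 1).indicator
      fun t : ℝ => ((Chebyshev.psi t : ℂ) - t) * (t : ℂ) ^ (-(s + 1)) := by
  ext t
  simp only [logPowPsiError, Set.indicator_apply, pow_zero, one_mul, Complex.ofReal_sub, neg_add',
    smul_eq_mul, mul_ite, mul_zero]
  rw [mul_comm]

lemma integrableOn_psi_sub_self_mul_cpow {s : ℂ} (hs : 1 < s.re) :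
    IntegrableOn (fun t : ℝ => ((Chebyshev.psi t : ℂ) - t) * (t : ℂ) ^ (-(s + 1))) (Set.Ioi 1) := by
  have hconv := mellinConvergent_logPowPsiError 0 hs
  rw [MellinConvergent, cpow_smul_logPowPsiError_zero, IntegrableOn,
    integrable_indicator_iff measurableSet_Ioi, IntegrableOn,
    Measure.restrict_restrict measurableSet_Ioi, Set.Ioi_inter_Ioi, sup_of_le_left zero_le_one]
    at hconv
  exact hconv

lemma mellin_logPowPsiError_zero {s : ℂ} (hs : 1 < s.re) :
    mellin (logPowPsiError 0) (-s) = psiTransform s := by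
  have hs1 : s ≠ 1 := by rintro rfl; simp at hs
  have hs0 : s ≠ 0 := by rintro rfl; simp [not_lt.2 zero_le_one] at hs
  have h1s := sub_ne_zero.2 hs1
  have hpow : ∫ t in Set.Ioi (1 : ℝ), (t : ℂ) ^ (-s) = 1 / (s - 1) := by
    rw [integral_Ioi_cpow_of_lt (by simpa using hs) one_pos, Complex.ofReal_one,
      Complex.one_cpow, ← neg_div_neg_eq]
    ring_nf
  have hpsi : ∫ t in Set.Ioi (1 : ℝ), (Chebyshev.psi t : ℂ) * (t : ℂ) ^ (-(s + 1)) =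
      mellin (logPowPsiError 0) (-s) + 1 / (s - 1) := by
    rw [mellin, cpow_smul_logPowPsiError_zero, setIntegral_indicator measurableSet_Ioi,
      Set.Ioi_inter_Ioi, sup_of_le_right zero_le_one, ← hpow,
      ← integral_add (integrableOn_psi_sub_self_mul_cpow hs)
        (integrableOn_Ioi_cpow_of_lt (by simpa using hs) one_pos)]
    refine setIntegral_congr_fun measurableSet_Ioi fun t ht => ?_
    have ht0 : (t : ℂ) ≠ 0 := by exact_mod_cast (one_pos.trans (Set.mem_Ioi.1 ht)).ne'
    have hcpow : (t : ℂ) ^ (-s) = t * (t : ℂ) ^ (-(s + 1)) := by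
      rw [show -s = 1 + -(s + 1) by ring, Complex.cpow_add _ _ ht0, Complex.cpow_one]
    simp only [hcpow]
    ring
  rw [psiTransform_eq hs1 hs0 (riemannZeta_ne_zero_of_one_le_re hs.le),
    neg_deriv_riemannZeta_div_eq_integral_psi hs, hpsi]
  field_simp
  ring

lemma iteratedDeriv_psiTransform_eq_mellin (k : ℕ) {s : ℂ} (hs : 1 < s.re) :
    iteratedDeriv k psiTransform s = (-1) ^ k * mellin (logPowPsiError k) (-s) := by
  induction k generalizing s with
  | zero => rw [iteratedDeriv_zero, pow_zero, one_mul, mellin_logPowPsiError_zero hs]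
  | succ k ih =>
    have heq : iteratedDeriv k psiTransform =ᶠ[𝓝 s]
        fun z => (-1) ^ k * mellin (logPowPsiError k) (-z) := by
      filter_upwards [(isOpen_lt continuous_const Complex.continuous_re).mem_nhds hs] with z hz
        using ih hz
    rw [iteratedDeriv_succ, heq.deriv_eq,
      ((hasDerivAt_mellin_logPowPsiError_neg k hs).const_mul _).deriv, pow_succ]
    ring

end MellinPsiError

section MellinSmoothing

open MeasureTheory Filter FourierTransform

lemma schwartzMap_apply_eq_integral_fourier (φ : SchwartzMap ℝ ℂ) (x : ℝ) :
    φ x = ∫ t : ℝ, Complex.exp (((2 * Real.pi * (t * x) : ℝ) : ℂ) * Complex.I) * 𝓕 φ t := by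
  have hinv : (𝓕⁻ (𝓕 φ : SchwartzMap ℝ ℂ) : SchwartzMap ℝ ℂ) = φ := fourierInv_fourier_eq φ
  conv_lhs => rw [← hinv, SchwartzMap.fourierInv_coe]
  simp only [Real.fourierInv_eq', RCLike.inner_apply, conj_trivial, smul_eq_mul, mul_comm x]

lemma integrable_exp_mul_cpow_smul_mul_fourier (φ : SchwartzMap ℝ ℂ) {f : ℝ → ℂ} {s : ℂ}
    (hf : MellinConvergent f s) (l a : ℝ) :
    Integrable (Function.uncurry fun u t : ℝ =>
      Complex.exp (((2 * Real.pi * (t * (l * (Real.log u - a))) : ℝ) : ℂ) * Complex.I) *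
        ((u : ℂ) ^ (s - 1) • f u * 𝓕 φ t)) ((volume.restrict (Set.Ioi 0)).prod volume) := by
  have hprod := Integrable.mul_prod (f := fun u : ℝ => (u : ℂ) ^ (s - 1) • f u)
    (g := fun t => 𝓕 φ t) (ν := volume) hf (𝓕 φ).integrable
  refine hprod.mono (AEStronglyMeasurable.mul ?_ hprod.aestronglyMeasurable)
    (Eventually.of_forall fun p => ?_)
  · exact (by fun_prop : Measurable fun p : ℝ × ℝ => Complex.exp
      (((2 * Real.pi * (p.2 * (l * (Real.log p.1 - a))) : ℝ) : ℂ)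
        * Complex.I)).aestronglyMeasurable
  · rw [Function.uncurry_def, norm_mul, Complex.norm_exp_ofReal_mul_I, one_mul]

lemma exp_mul_cpow_sub_one {u : ℝ} (hu : 0 < u) (s : ℂ) (t l a : ℝ) :
    Complex.exp (((2 * Real.pi * (t * (l * (Real.log u - a))) : ℝ) : ℂ) * Complex.I) *
        (u : ℂ) ^ (s - 1) =
      Complex.exp (((-(2 * Real.pi * (t * (l * a))) : ℝ) : ℂ) * Complex.I) *
        (u : ℂ) ^ (s + ((2 * Real.pi * (t * l) : ℝ) : ℂ) * Complex.I - 1) := by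
  have hu0 : (u : ℂ) ≠ 0 := by exact_mod_cast hu.ne'
  rw [Complex.cpow_def_of_ne_zero hu0, Complex.cpow_def_of_ne_zero hu0, ← Complex.exp_add,
    ← Complex.exp_add, ← Complex.ofReal_log hu.le]
  push_cast
  ring_nf

/-- A Schwartz weight in the variable `log u` averages the Mellin transform over a vertical
line. -/
lemma integral_schwartz_mul_cpow_smul (φ : SchwartzMap ℝ ℂ) {f : ℝ → ℂ} {s : ℂ}
    (hf : MellinConvergent f s) (l a : ℝ) :
    ∫ u in Set.Ioi (0 : ℝ), φ (l * (Real.log u - a)) * ((u : ℂ) ^ (s - 1) • f u) =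
      ∫ t : ℝ, 𝓕 φ t * (Complex.exp (((-(2 * Real.pi * (t * (l * a))) : ℝ) : ℂ) * Complex.I) *
        mellin f (s + ((2 * Real.pi * (t * l) : ℝ) : ℂ) * Complex.I)) := by
  calc ∫ u in Set.Ioi (0 : ℝ), φ (l * (Real.log u - a)) * ((u : ℂ) ^ (s - 1) • f u)
      = ∫ u in Set.Ioi (0 : ℝ), ∫ t : ℝ,
          Complex.exp (((2 * Real.pi * (t * (l * (Real.log u - a))) : ℝ) : ℂ) * Complex.I) *
            ((u : ℂ) ^ (s - 1) • f u * 𝓕 φ t) := by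
        congr 1 with u
        rw [schwartzMap_apply_eq_integral_fourier, ← integral_mul_const]
        congr 1 with t
        ring
    _ = ∫ t : ℝ, ∫ u in Set.Ioi (0 : ℝ),
          Complex.exp (((2 * Real.pi * (t * (l * (Real.log u - a))) : ℝ) : ℂ) * Complex.I) *
            ((u : ℂ) ^ (s - 1) • f u * 𝓕 φ t) :=
        integral_integral_swap (integrable_exp_mul_cpow_smul_mul_fourier φ hf l a)
    _ = _ := by
        congr 1 with t
        rw [mellin, ← integral_const_mul, ← integral_const_mul]
        refine setIntegral_congr_fun measurableSet_Ioi fun u hu => ?_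
        simp only [smul_eq_mul]
        linear_combination (f u * 𝓕 φ t) * exp_mul_cpow_sub_one hu s t l a

lemma integrableOn_schwartz_mul_cpow_smul (φ : SchwartzMap ℝ ℂ) {f : ℝ → ℂ} {s : ℂ}
    (hf : MellinConvergent f s) (l a : ℝ) :
    IntegrableOn (fun u : ℝ => φ (l * (Real.log u - a)) * ((u : ℂ) ^ (s - 1) • f u))
      (Set.Ioi 0) :=
  Integrable.bdd_mul (c := SchwartzMap.seminorm ℝ 0 0 φ) hf
    (φ.continuous.measurable.comp (by fun_prop)).aestronglyMeasurable
    (Eventually.of_forall fun _ => SchwartzMap.norm_le_seminorm ℝ φ _)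

lemma integrableOn_and_integral_comp_log_mul_inv {κ : ℝ → ℝ} (hκ : Integrable κ) {l : ℝ}
    (hl : 0 < l) (a : ℝ) :
    IntegrableOn (fun u => κ (l * (Real.log u - a)) * u⁻¹) (Set.Ioi 0) ∧
      ∫ u in Set.Ioi (0 : ℝ), κ (l * (Real.log u - a)) * u⁻¹ = l⁻¹ * ∫ t, κ t := by
  have himage : Real.exp '' Set.univ = Set.Ioi (0 : ℝ) := by rw [Set.image_univ, Real.range_exp]
  have hderiv : ∀ x ∈ (Set.univ : Set ℝ), HasDerivWithinAt Real.exp (Real.exp x) Set.univ x :=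
    fun x _ => (Real.hasDerivAt_exp x).hasDerivWithinAt
  have hsubst : (fun x : ℝ => |Real.exp x| •
      (κ (l * (Real.log (Real.exp x) - a)) * (Real.exp x)⁻¹)) = fun x => κ (l * (x - a)) := by
    ext x
    rw [Real.log_exp, smul_eq_mul, abs_of_pos (Real.exp_pos x), mul_left_comm,
      mul_inv_cancel₀ (Real.exp_pos x).ne', mul_one]
  constructor
  · rw [← himage, integrableOn_image_iff_integrableOn_abs_deriv_smul MeasurableSet.univ hderiv
      Real.exp_injective.injOn, hsubst, integrableOn_univ]
    exact (hκ.comp_mul_left' hl.ne').comp_sub_right a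
  · rw [← himage, integral_image_eq_integral_abs_deriv_smul MeasurableSet.univ hderiv
      Real.exp_injective.injOn, hsubst, setIntegral_univ,
      integral_sub_right_eq_self (fun x => κ (l * x)), Measure.integral_comp_mul_left,
      abs_of_pos (inv_pos.2 hl), smul_eq_mul]

lemma exists_schwartz_kernel : ∃ (φ : SchwartzMap ℝ ℂ) (κ : ℝ → ℝ), (∀ x, φ x = κ x) ∧
    (∀ x, 0 ≤ κ x) ∧ (∀ x, κ x ≠ 0 → x ∈ Set.Icc 0 1) ∧ Integrable κ ∧ ∫ x, κ x = 1 := by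
  let b : ContDiffBump (1 / 2 : ℝ) := ⟨1 / 4, 1 / 2, by norm_num, by norm_num⟩
  have hsupp : HasCompactSupport fun x => (b.normed volume x : ℂ) :=
    b.hasCompactSupport_normed.comp_left (g := fun x : ℝ => (x : ℂ)) Complex.ofReal_zero
  have hsmooth : ContDiff ℝ (⊤ : ℕ∞) fun x => (b.normed volume x : ℂ) :=
    Complex.ofRealCLM.contDiff.comp b.contDiff_normed
  refine ⟨hsupp.toSchwartzMap hsmooth, b.normed volume, fun x => rfl, b.nonneg_normed,
    fun x hx => ?_, b.integrable_normed, b.integral_normed⟩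
  have hball : x ∈ Metric.ball (1 / 2 : ℝ) (1 / 2) := by
    rwa [← Function.mem_support, b.support_normed_eq] at hx
  rw [Real.ball_eq_Ioo] at hball
  constructor <;> linarith [hball.1, hball.2]

end MellinSmoothing

section PsiAsymptotics

open MeasureTheory Filter Asymptotics

lemma exists_norm_integral_schwartz_mul_logPowPsiError_le (k : ℕ) (φ : SchwartzMap ℝ ℂ) :
    ∃ C : ℝ, ∀ l a σ : ℝ, 1 < σ → σ ≤ 2 → ‖∫ u in Set.Ioi (0 : ℝ),
      φ (l * (Real.log u - a)) * ((u : ℂ) ^ (-(σ : ℂ) - 1) • logPowPsiError k u)‖ ≤ C := by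
  obtain ⟨C, hC⟩ := exists_norm_iteratedDeriv_psiTransform_le k
  refine ⟨∫ t : ℝ, ‖FourierTransform.fourier φ t‖ * C, fun l a σ h1 h2 => ?_⟩
  rw [integral_schwartz_mul_cpow_smul φ
    (mellinConvergent_logPowPsiError k (s := σ) (by simpa using h1))]
  refine norm_integral_le_of_norm_le ((FourierTransform.fourier φ).integrable.norm.mul_const C)
    (Eventually.of_forall fun t => ?_)
  set z : ℂ := σ - ((2 * Real.pi * (t * l) : ℝ) : ℂ) * Complex.I with hz
  have hre : z.re = σ := by simp [hz]
  have hmellin : ‖mellin (logPowPsiError k) (-z)‖ = ‖iteratedDeriv k psiTransform z‖ := by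
    rw [iteratedDeriv_psiTransform_eq_mellin k (hre ▸ h1), norm_mul, norm_pow, norm_neg, norm_one,
      one_pow, one_mul]
  rw [norm_mul, norm_mul, Complex.norm_exp_ofReal_mul_I, one_mul,
    show -(σ : ℂ) + ((2 * Real.pi * (t * l) : ℝ) : ℂ) * Complex.I = -z by rw [hz]; ring, hmellin]
  gcongr
  exact hC z (hre ▸ h1.le) (hre ▸ h2)

lemma cpow_smul_logPowPsiError (k : ℕ) {u σ : ℝ} (hu : 1 < u) :
    (u : ℂ) ^ (-(σ : ℂ) - 1) • logPowPsiError k u = ((u⁻¹ *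
      (Real.exp (-(σ * Real.log u)) * Real.log u ^ k) * (Chebyshev.psi u - u) : ℝ) : ℂ) := by
  have hu0 : 0 < u := one_pos.trans hu
  have hcpow : (u : ℂ) ^ (-(σ : ℂ) - 1) = ((u⁻¹ * Real.exp (-(σ * Real.log u)) : ℝ) : ℂ) := by
    rw [show -(σ : ℂ) - 1 = ((-1 + -σ : ℝ) : ℂ) by push_cast; ring, ← Complex.ofReal_cpow hu0.le,
      Real.rpow_add hu0, Real.rpow_neg_one, Real.rpow_def_of_pos hu0]
    ring_nf
  rw [hcpow, logPowPsiError_of_one_lt k hu, smul_eq_mul, ← Complex.ofReal_mul]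
  ring_nf

lemma exp_neg_mul_half_pow_le {V y : ℝ} (hV : 2 ≤ V) (hy : |y - V| ≤ 1) (k : ℕ) :
    Real.exp (-3) * Real.exp (-V) * (V / 2) ^ k ≤ Real.exp (-((1 + V⁻¹) * y)) * y ^ k := by
  have hy' := abs_le.1 hy
  have hinv : V⁻¹ ≤ 1 := inv_le_one_of_one_le₀ (by linarith)
  have hmul : V⁻¹ * y ≤ V⁻¹ * (V + 1) := by gcongr; linarith
  rw [mul_add, inv_mul_cancel₀ (by linarith)] at hmul
  rw [← Real.exp_add]
  gcongr <;> linarith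

lemma exp_neg_mul_half_pow_mul_inv_le {V d ε u : ℝ} (hV : 2 ≤ V) (hd : 0 ≤ d) (k : ℕ) (hu0 : 0 < u)
    (hu : |Real.log u - V| ≤ 1) (hψ : d * Real.exp V ≤ ε * (Chebyshev.psi u - u)) :
    Real.exp (-3) * (V / 2) ^ k * d * u⁻¹ ≤
      ε * ((u : ℂ) ^ (-((1 + V⁻¹ : ℝ) : ℂ) - 1) • logPowPsiError k u).re := by
  have hlog : 1 ≤ Real.log u := by linarith [(abs_le.1 hu).1]
  have hu1 : 1 < u := (Real.log_pos_iff hu0.le).1 (by linarith)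
  have hexp : Real.exp (-V) * Real.exp V = 1 := by
    rw [← Real.exp_add, neg_add_cancel, Real.exp_zero]
  rw [cpow_smul_logPowPsiError k hu1, Complex.ofReal_re]
  calc Real.exp (-3) * (V / 2) ^ k * d * u⁻¹
      = Real.exp (-3) * Real.exp (-V) * (V / 2) ^ k * (d * Real.exp V) * u⁻¹ := by
        linear_combination -(Real.exp (-3) * (V / 2) ^ k * d * u⁻¹) * hexp
    _ ≤ Real.exp (-((1 + V⁻¹) * Real.log u)) * Real.log u ^ k * (ε * (Chebyshev.psi u - u)) *
          u⁻¹ := by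
        refine mul_le_mul_of_nonneg_right ?_ (inv_pos.2 hu0).le
        exact mul_le_mul (exp_neg_mul_half_pow_le hV hu k) hψ (by positivity) (by positivity)
    _ = _ := by ring

lemma exists_le_mul_of_mul_inv_le_on_window (k : ℕ) : ∃ C : ℝ, 0 ≤ C ∧ ∀ l a σ ε m : ℝ, 0 < l →
    1 < σ → σ ≤ 2 → |ε| = 1 → (∀ u ∈ Set.Icc (Real.exp a) (Real.exp (a + l⁻¹)),
      m * u⁻¹ ≤ ε * ((u : ℂ) ^ (-(σ : ℂ) - 1) • logPowPsiError k u).re) → m ≤ C * l := by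
  obtain ⟨φ, κ, hφκ, hκ0, hκsupp, hκint, hκone⟩ := exists_schwartz_kernel
  obtain ⟨C, hC⟩ := exists_norm_integral_schwartz_mul_logPowPsiError_le k φ
  refine ⟨C, (norm_nonneg _).trans (hC 0 0 2 one_lt_two le_rfl), fun l a σ ε m hl h1 h2 hε h => ?_⟩
  set f : ℝ → ℂ := fun u => φ (l * (Real.log u - a)) *
    ((u : ℂ) ^ (-(σ : ℂ) - 1) • logPowPsiError k u) with hf
  have hfint : IntegrableOn f (Set.Ioi 0) := integrableOn_schwartz_mul_cpow_smul φ
    (mellinConvergent_logPowPsiError k (by simpa using h1)) l a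
  obtain ⟨hint, hval⟩ := integrableOn_and_integral_comp_log_mul_inv hκint hl a
  have hpointwise : ∀ u ∈ Set.Ioi (0 : ℝ),
      m * (κ (l * (Real.log u - a)) * u⁻¹) ≤ ε * (f u).re := by
    intro u hu
    simp only [hf, hφκ, Complex.re_ofReal_mul]
    rcases eq_or_ne (κ (l * (Real.log u - a))) 0 with hzero | hne
    · simp only [hzero, zero_mul, mul_zero, le_refl]
    obtain ⟨hlow, hupp⟩ := hκsupp _ hne
    rw [← le_div_iff₀' hl, one_div, sub_le_iff_le_add'] at hupp
    have hbound := mul_le_mul_of_nonneg_left (h u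
      ⟨(Real.le_log_iff_exp_le hu).1 (sub_nonneg.1 (nonneg_of_mul_nonneg_right hlow hl)),
        (Real.log_le_iff_le_exp hu).1 hupp⟩) (hκ0 (l * (Real.log u - a)))
    linarith
  rw [← div_le_iff₀ hl]
  calc m / l = ∫ u in Set.Ioi (0 : ℝ), m * (κ (l * (Real.log u - a)) * u⁻¹) := by
        rw [integral_const_mul, hval, hκone, mul_one, div_eq_mul_inv]
    _ ≤ ∫ u in Set.Ioi (0 : ℝ), ε * (f u).re := setIntegral_mono_on (hint.const_mul _)
        (hfint.re.const_mul ε) measurableSet_Ioi hpointwise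
    _ = ε * (∫ u in Set.Ioi (0 : ℝ), f u).re := by
        rw [integral_const_mul]
        exact congrArg (ε * ·) (integral_re hfint)
    _ ≤ |(∫ u in Set.Ioi (0 : ℝ), f u).re| := by
        simpa only [abs_mul, hε, one_mul] using le_abs_self (ε * (∫ u in Set.Ioi (0 : ℝ), f u).re)
    _ ≤ C := (Complex.abs_re_le_norm _).trans (hC l a σ h1 h2)

/-- If `ψ(u) - u` is one-signed and of size `d e ^ V` on a logarithmic window of length `1 / l` next
to `e ^ V`, its smooth average over that window is at least a multiple of `d V ^ k / l`, whereas the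
average is bounded by the transform. -/
lemma exists_mul_pow_le_of_le_on_window (k : ℕ) : ∃ C : ℝ, ∀ V l a ε d : ℝ, 2 ≤ V → 1 ≤ l →
    V - l⁻¹ ≤ a → a ≤ V → |ε| = 1 →
    (∀ u ∈ Set.Icc (Real.exp a) (Real.exp (a + l⁻¹)),
      d * Real.exp V ≤ ε * (Chebyshev.psi u - u)) → d * V ^ k ≤ C * l := by
  obtain ⟨C, hC0, hC⟩ := exists_le_mul_of_mul_inv_le_on_window k
  refine ⟨Real.exp 3 * 2 ^ k * C, fun V l a ε d hV hl ha1 ha2 hε h => ?_⟩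
  rcases lt_or_ge d 0 with hd | hd
  · exact (mul_nonpos_of_nonpos_of_nonneg hd.le (by positivity)).trans (by positivity)
  have hl1 : l⁻¹ ≤ 1 := inv_le_one_of_one_le₀ hl
  have hV1 : V⁻¹ ≤ 1 := inv_le_one_of_one_le₀ (by linarith)
  have hle := hC l a (1 + V⁻¹) ε (Real.exp (-3) * (V / 2) ^ k * d) (by linarith)
    (lt_add_of_pos_right 1 (by positivity)) (by linarith) hε fun u hu => by
      have hu0 : 0 < u := (Real.exp_pos a).trans_le hu.1
      have hlow := (Real.le_log_iff_exp_le hu0).2 hu.1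
      have hupp := (Real.log_le_iff_le_exp hu0).2 hu.2
      exact exp_neg_mul_half_pow_mul_inv_le hV hd k hu0
        (abs_le.2 ⟨by linarith, by linarith⟩) (h u hu)
  rw [Real.exp_neg, div_pow] at hle
  calc d * V ^ k = Real.exp 3 * 2 ^ k * ((Real.exp 3)⁻¹ * (V ^ k / 2 ^ k) * d) := by field_simp
    _ ≤ Real.exp 3 * 2 ^ k * (C * l) := by gcongr
    _ = _ := by ring

lemma exists_le_mul_div_log_pow_of_le_on_window (A : ℕ) : ∃ C : ℝ, ∀ x a ε D : ℝ, Real.exp 2 ≤ x →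
    Real.log x - (Real.log x ^ A)⁻¹ ≤ a → a ≤ Real.log x → |ε| = 1 →
    (∀ u ∈ Set.Icc (Real.exp a) (Real.exp (a + (Real.log x ^ A)⁻¹)),
      D ≤ ε * (Chebyshev.psi u - u)) → D ≤ C * (x / Real.log x ^ A) := by
  obtain ⟨C, hC⟩ := exists_mul_pow_le_of_le_on_window (2 * A)
  refine ⟨C, fun x a ε D hx ha1 ha2 hε h => ?_⟩
  have hx0 : 0 < x := (Real.exp_pos 2).trans_le hx
  have hV : 2 ≤ Real.log x := (Real.le_log_iff_exp_le hx0).2 hx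
  have hl1 : 1 ≤ Real.log x ^ A := one_le_pow₀ (by linarith)
  have hl0 : 0 < Real.log x ^ A := one_pos.trans_le hl1
  have hD := hC (Real.log x) (Real.log x ^ A) a ε (D / x) hV hl1 ha1 ha2 hε (by
    rwa [Real.exp_log hx0, div_mul_cancel₀ D hx0.ne'])
  rw [mul_comm 2 A, pow_mul, div_mul_eq_mul_div, div_le_iff₀ hx0, pow_two, ← mul_assoc,
    mul_right_comm C] at hD
  rw [← mul_div_assoc, le_div_iff₀ hl0]
  exact le_of_mul_le_mul_right hD hl0

lemma exists_abs_psi_sub_self_le (A : ℕ) : ∃ C : ℝ, ∀ x : ℝ, Real.exp 2 ≤ x →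
    |Chebyshev.psi x - x| ≤ C * (x / Real.log x ^ A) := by
  obtain ⟨C, hC⟩ := exists_le_mul_div_log_pow_of_le_on_window A
  refine ⟨C + 2, fun x hx => ?_⟩
  have hx0 : 0 < x := (Real.exp_pos 2).trans_le hx
  have hl1 : 1 ≤ Real.log x ^ A := one_le_pow₀ (by
    linarith [(Real.le_log_iff_exp_le hx0).2 hx])
  replace hC := hC x
  set l := Real.log x ^ A
  have hli : 0 < l⁻¹ := inv_pos.2 (one_pos.trans_le hl1)
  have hlower : x - Chebyshev.psi x - x / l ≤ C * (x / l) := by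
    refine hC (Real.log x - l⁻¹) (-1) _ hx le_rfl (by linarith) (by simp) fun u hu => ?_
    rw [sub_add_cancel, Real.exp_log hx0, sub_eq_add_neg, Real.exp_add, Real.exp_log hx0] at hu
    have hexp : x * (1 - l⁻¹) ≤ x * Real.exp (-l⁻¹) := by
      gcongr
      exact Real.one_sub_le_exp_neg _
    rw [div_eq_mul_inv]
    linarith [hu.1, Chebyshev.psi_mono hu.2]
  have hupper : Chebyshev.psi x - x - 2 * (x / l) ≤ C * (x / l) := by
    refine hC (Real.log x) 1 _ hx (by linarith) le_rfl (by simp) fun u hu => ?_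
    rw [Real.exp_add, Real.exp_log hx0] at hu
    have hexp : x * Real.exp l⁻¹ ≤ x * (1 + 2 * l⁻¹) := by
      have hl' : |l⁻¹| ≤ 1 := by rw [abs_of_pos hli]; exact inv_le_one_of_one_le₀ hl1
      have := (abs_le.1 (Real.abs_exp_sub_one_le hl')).2
      rw [abs_of_pos hli] at this
      gcongr
      linarith
    rw [div_eq_mul_inv]
    linarith [hu.2, Chebyshev.psi_mono hu.1]
  have hpos : 0 ≤ x / l := by positivity
  rw [abs_le]
  constructor <;> linarith

end PsiAsymptotics

section PrimeCounting

open Asymptotics Filter Topology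
open scoped Nat.Prime

lemma rpow_isBigO_rpow_div_log_pow {a b : ℝ} (hab : a < b) (k : ℕ) :
    (fun x : ℝ => x ^ a) =O[atTop] fun x => x ^ b / Real.log x ^ k := by
  have hlog : (fun x => Real.log x ^ k) =O[atTop] fun x : ℝ => x ^ (b - a) := by
    simpa only [Real.rpow_natCast] using
      (isLittleO_log_rpow_rpow_atTop k (sub_pos.2 hab)).isBigO
  refine (hlog.mul (isBigO_refl (fun x : ℝ => x ^ a / Real.log x ^ k) atTop)).congr' ?_ ?_
  · filter_upwards [eventually_gt_atTop 1] with x hx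
    exact mul_div_cancel₀ _ (pow_pos (Real.log_pos hx) k).ne'
  · filter_upwards [eventually_gt_atTop 0] with x hx
    rw [← mul_div_assoc, ← Real.rpow_add hx, sub_add_cancel]

lemma psi_sub_self_isBigO (A : ℕ) :
    (fun x => Chebyshev.psi x - x) =O[atTop] fun x => x / Real.log x ^ A := by
  obtain ⟨C, hC⟩ := exists_abs_psi_sub_self_le A
  refine IsBigO.of_bound C ?_
  filter_upwards [eventually_ge_atTop (Real.exp 2)] with x hx
  have hx0 : 0 < x := (Real.exp_pos 2).trans_le hx
  have hlog : 0 ≤ Real.log x := by linarith [(Real.le_log_iff_exp_le hx0).2 hx]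
  rw [Real.norm_eq_abs, Real.norm_of_nonneg (by positivity)]
  exact hC x hx

lemma theta_sub_self_isBigO (A : ℕ) :
    (fun x => Chebyshev.theta x - x) =O[atTop] fun x => x / Real.log x ^ A := by
  have hsqrt : Real.sqrt =O[atTop] fun x => x / Real.log x ^ A := by
    simpa only [← Real.sqrt_eq_rpow, Real.rpow_one] using
      rpow_isBigO_rpow_div_log_pow (show (1 / 2 : ℝ) < 1 by norm_num) A
  refine ((psi_sub_self_isBigO A).sub
    (Chebyshev.isBigO_psi_sub_theta_sqrt.trans hsqrt)).congr_left fun x => ?_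
  rw [Pi.sub_apply]
  ring

lemma primeCounting_sub_div_log_isBigO :
    (fun x : ℝ => (π ⌊x⌋₊ : ℝ) - x / Real.log x) =O[atTop] fun x => x / Real.log x ^ 2 := by
  have htheta : (fun x => (Chebyshev.theta x - x) * (Real.log x)⁻¹) =O[atTop]
      fun x => x / Real.log x ^ 2 := by
    refine ((theta_sub_self_isBigO 1).mul (isBigO_refl _ _)).congr_right fun x => ?_
    field_simp
  refine (Chebyshev.primeCounting_sub_theta_div_log_isBigO.add htheta).congr_left fun x => ?_
  field_simp
  ring

lemma mul_primeCounting_sub_isBigO {g : ℝ → ℝ} {b c : ℝ}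
    (hg : (fun x => g x - c * x ^ b) =O[atTop] fun x : ℝ => x ^ (b - 1)) :
    (fun x => g x * π ⌊x⌋₊ - c * (x ^ (b + 1) / Real.log x)) =O[atTop]
      fun x => x ^ (b + 1) / Real.log x ^ 2 := by
  have hpi : (fun x : ℝ => (π ⌊x⌋₊ : ℝ)) =O[atTop] fun x => x := by
    refine IsBigO.of_bound 2 ?_
    filter_upwards [eventually_ge_atTop 1] with x hx
    have hx0 : 0 ≤ x := by linarith
    rw [Real.norm_of_nonneg (Nat.cast_nonneg _), Real.norm_of_nonneg hx0]
    calc (π ⌊x⌋₊ : ℝ) ≤ (⌊x⌋₊ + 1 : ℕ) := Nat.cast_le.2 (Nat.count_le ..)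
      _ ≤ 2 * x := by push_cast; linarith [Nat.floor_le hx0]
  have hleft : (fun x => (g x - c * x ^ b) * π ⌊x⌋₊) =O[atTop]
      fun x => x ^ (b + 1) / Real.log x ^ 2 := by
    refine ((hg.mul hpi).congr' .rfl ?_).trans (rpow_isBigO_rpow_div_log_pow (lt_add_one b) 2)
    filter_upwards [eventually_gt_atTop 0] with x hx
    rw [← Real.rpow_add_one hx.ne', sub_add_cancel]
  have hright : (fun x => x ^ b * (π ⌊x⌋₊ - x / Real.log x)) =O[atTop]
      fun x => x ^ (b + 1) / Real.log x ^ 2 := by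
    refine ((isBigO_refl _ _).mul primeCounting_sub_div_log_isBigO).congr' .rfl ?_
    filter_upwards [eventually_gt_atTop 0] with x hx
    rw [Real.rpow_add_one hx.ne', mul_div_assoc]
  refine (hleft.add (hright.const_mul_left c)).congr' ?_ .rfl
  filter_upwards [eventually_gt_atTop 0] with x hx
  rw [Real.rpow_add_one hx.ne']
  ring

end PrimeCounting

section LogIntegral

open Asymptotics Filter MeasureTheory

lemma hasDerivAt_rpow_div_log_pow (a : ℝ) (k : ℕ) {u : ℝ} (hu : 1 < u) :
    HasDerivAt (fun v : ℝ => v ^ a / Real.log v ^ k)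
      (a * (u ^ (a - 1) / Real.log u ^ k) - k * (u ^ (a - 1) / Real.log u ^ (k + 1))) u := by
  have hu0 : u ≠ 0 := by linarith
  have hlog : Real.log u ≠ 0 := (Real.log_pos hu).ne'
  refine ((Real.hasDerivAt_rpow_const (p := a) (Or.inl hu0)).div
    ((Real.hasDerivAt_log hu0).pow k) (pow_ne_zero k hlog)).congr_deriv ?_
  rw [Pi.pow_apply, Real.rpow_sub_one hu0]
  rcases k with _ | k
  · simp
  · rw [Nat.add_sub_cancel]
    field_simp
    ring

lemma intervalIntegrable_rpow_div_log_pow (a : ℝ) (k : ℕ) {b c : ℝ} (hb : 1 < b) (hc : 1 < c) :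
    IntervalIntegrable (fun u : ℝ => u ^ a / Real.log u ^ k) volume b c :=
  ContinuousOn.intervalIntegrable fun _ hu =>
    (hasDerivAt_rpow_div_log_pow a k ((lt_min hb hc).trans_le hu.1)).continuousAt.continuousWithinAt

lemma integral_rpow_div_log_pow_sub (a : ℝ) (k : ℕ) {b c : ℝ} (hb : 1 < b) (hc : 1 < c) :
    ∫ u in b..c, (a * (u ^ (a - 1) / Real.log u ^ k) - k * (u ^ (a - 1) / Real.log u ^ (k + 1))) =
      c ^ a / Real.log c ^ k - b ^ a / Real.log b ^ k :=
  intervalIntegral.integral_eq_sub_of_hasDerivAt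
    (fun _ hu => hasDerivAt_rpow_div_log_pow a k ((lt_min hb hc).trans_le hu.1))
    (((intervalIntegrable_rpow_div_log_pow _ k hb hc).const_mul a).sub
      ((intervalIntegrable_rpow_div_log_pow _ (k + 1) hb hc).const_mul k))

lemma isBigO_intervalIntegral {f g h : ℝ → ℝ} {a : ℝ}
    (hf : ∀ x, a ≤ x → IntervalIntegrable f volume a x)
    (hg : ∀ x, a ≤ x → IntervalIntegrable g volume a x) (hg0 : ∀ᶠ x in atTop, 0 ≤ g x)
    (hfg : f =O[atTop] g) (hgh : (fun x => ∫ u in a..x, g u) =O[atTop] h)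
    (hone : (fun _ => (1 : ℝ)) =O[atTop] h) : (fun x => ∫ u in a..x, f u) =O[atTop] h := by
  obtain ⟨C, hC⟩ := hfg.bound
  obtain ⟨b, hb⟩ := eventually_atTop.1 (hC.and (hg0.and (eventually_ge_atTop a)))
  have hab : a ≤ b := (hb b le_rfl).2.2
  have hconst (K : ℝ) : (fun _ => K) =O[atTop] h := by
    simpa only [mul_one] using hone.const_mul_left K
  refine IsBigO.trans ?_ ((hconst |∫ u in a..b, f u|).add
    ((hgh.sub (hconst (∫ u in a..b, g u))).const_mul_left C))
  refine IsBigO.of_bound 1 ?_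
  filter_upwards [eventually_ge_atTop b] with x hx
  have hfx : IntervalIntegrable f volume b x := (hf b hab).symm.trans (hf x (hab.trans hx))
  have hgx : IntervalIntegrable g volume b x := (hg b hab).symm.trans (hg x (hab.trans hx))
  have hbound : |∫ u in b..x, f u| ≤ C * ∫ u in b..x, g u := by
    rw [← intervalIntegral.integral_const_mul]
    refine (intervalIntegral.abs_integral_le_integral_abs hx).trans
      (intervalIntegral.integral_mono_on hx hfx.abs (hgx.const_mul C) fun u hu => ?_)
    simpa only [Real.norm_eq_abs, abs_of_nonneg (hb u hu.1).2.1] using (hb u hu.1).1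
  rw [← intervalIntegral.integral_add_adjacent_intervals (hf b hab) hfx,
    ← intervalIntegral.integral_add_adjacent_intervals (hg b hab) hgx, add_sub_cancel_left, one_mul]
  calc ‖(∫ u in a..b, f u) + ∫ u in b..x, f u‖ ≤ |∫ u in a..b, f u| + |∫ u in b..x, f u| :=
        abs_add_le _ _
    _ ≤ |∫ u in a..b, f u| + C * ∫ u in b..x, g u := by gcongr
    _ ≤ _ := le_abs_self _

lemma integral_rpow_div_log_pow_isBigO {a : ℝ} (ha : 0 < a) (k : ℕ) :
    (fun x => ∫ u in (2 : ℝ)..x, u ^ (a - 1) / Real.log u ^ k) =O[atTop]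
      fun x => x ^ a / Real.log x ^ k := by
  set F : ℕ → ℝ → ℝ := fun j u => u ^ (a - 1) / Real.log u ^ j
  have hint (j : ℕ) {x : ℝ} (hx : 2 ≤ x) : IntervalIntegrable (F j) volume 2 x :=
    intervalIntegrable_rpow_div_log_pow _ j one_lt_two (one_lt_two.trans_le hx)
  have hone : (fun _ => (1 : ℝ)) =O[atTop] fun x : ℝ => x ^ a / Real.log x ^ k := by
    simpa only [Real.rpow_zero] using rpow_isBigO_rpow_div_log_pow ha k
  have hsucc : (fun u => (k : ℝ) * F (k + 1) u) =o[atTop] fun u => a * F k u := by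
    refine IsLittleO.const_mul_left (IsLittleO.const_mul_right ha.ne' ?_) (k : ℝ)
    have hlog : (fun u => (Real.log u)⁻¹) =o[atTop] fun _ => (1 : ℝ) :=
      (isLittleO_one_iff ℝ).2 Real.tendsto_log_atTop.inv_tendsto_atTop
    refine ((isBigO_refl (F k) atTop).mul_isLittleO hlog).congr (fun u => ?_) fun u => mul_one _
    rw [← div_eq_mul_inv, div_div, ← pow_succ]
  have hnonneg : ∀ᶠ u in atTop, 0 ≤ a * F k u - k * F (k + 1) u := by
    filter_upwards [hsucc.bound one_pos, eventually_ge_atTop 1] with u hu hu1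
    have hF : 0 ≤ a * F k u := by have := Real.log_nonneg hu1; positivity
    rw [one_mul, Real.norm_of_nonneg hF] at hu
    exact sub_nonneg.2 ((le_abs_self _).trans hu)
  have hfg : F k =O[atTop] fun u => a * F k u - k * F (k + 1) u :=
    (isBigO_const_mul_self a⁻¹ _ _).congr_left (fun u => inv_mul_cancel_left₀ ha.ne' _)
      |>.trans hsucc.right_isBigO_sub
  refine isBigO_intervalIntegral (fun x hx => hint k hx)
    (fun x hx => ((hint k hx).const_mul a).sub ((hint (k + 1) hx).const_mul k)) hnonneg hfg ?_ hone
  refine ((isBigO_refl _ _).sub (hone.const_mul_left (2 ^ a / Real.log 2 ^ k))).congr' ?_ .rfl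
  filter_upwards [eventually_ge_atTop 2] with x hx
  rw [mul_one]
  exact (integral_rpow_div_log_pow_sub a k one_lt_two (one_lt_two.trans_le hx)).symm

lemma integral_rpow_div_log_sub_isBigO {a : ℝ} (ha : 0 < a) :
    (fun x => a * (∫ u in (2 : ℝ)..x, u ^ (a - 1) / Real.log u) - x ^ a / Real.log x) =O[atTop]
      fun x => x ^ a / Real.log x ^ 2 := by
  have hone : (fun _ => (1 : ℝ)) =O[atTop] fun x : ℝ => x ^ a / Real.log x ^ 2 := by
    simpa only [Real.rpow_zero] using rpow_isBigO_rpow_div_log_pow ha 2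
  refine ((integral_rpow_div_log_pow_isBigO ha 2).sub
    (hone.const_mul_left (2 ^ a / Real.log 2))).congr' ?_ .rfl
  filter_upwards [eventually_ge_atTop 2] with x hx
  have hx1 : 1 < x := by linarith
  have hint (k : ℕ) := intervalIntegrable_rpow_div_log_pow (a - 1) k one_lt_two hx1
  have hparts := integral_rpow_div_log_pow_sub a 1 one_lt_two hx1
  rw [intervalIntegral.integral_sub ((hint 1).const_mul a) ((hint 2).const_mul _),
    intervalIntegral.integral_const_mul, intervalIntegral.integral_const_mul] at hparts
  simp only [pow_one, Nat.cast_one, one_mul] at hparts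
  linarith

end LogIntegral

section PowerDifferences

open Asymptotics Filter MeasureTheory Topology
open scoped Nat.Prime

lemma add_one_rpow_sub_isBigO (b : ℝ) :
    (fun x : ℝ => (x + 1) ^ b - x ^ b - b * x ^ (b - 1)) =O[atTop] fun x => x ^ (b - 1 - 1) := by
  have htaylor : (fun y : ℝ => (1 + y) ^ b - (1 + y * b)) =O[𝓝 0] fun y => y ^ 2 := by
    simpa [FormalMultilinearSeries.partialSum, sum_range_succ, binomialSeries] using
      (Real.one_add_rpow_hasFPowerSeriesAt_zero (a := b)).isBigO_sub_partialSum_pow 2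
  refine ((isBigO_refl (fun x : ℝ => x ^ b) atTop).mul
    (htaylor.comp_tendsto tendsto_inv_atTop_zero)).congr' ?_ ?_
  all_goals filter_upwards [eventually_gt_atTop 0] with x hx
  · have hfactor : (x + 1) ^ b = x ^ b * (1 + x⁻¹) ^ b := by
      rw [← Real.mul_rpow hx.le (by positivity), mul_add, mul_one, mul_inv_cancel₀ hx.ne']
    rw [Function.comp_apply, hfactor, Real.rpow_sub_one hx.ne']
    ring
  · rw [Function.comp_apply, Real.rpow_sub_one hx.ne', Real.rpow_sub_one hx.ne']
    ring

lemma add_one_rpow_sub_mul_primeCounting_isBigO (b : ℝ) :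
    (fun x : ℝ => ((x + 1) ^ b - x ^ b) * π ⌊x⌋₊ - b * (x ^ b / Real.log x)) =O[atTop]
      fun x => x ^ b / Real.log x ^ 2 := by
  simpa only [sub_add_cancel] using mul_primeCounting_sub_isBigO (add_one_rpow_sub_isBigO b)

lemma sum_primes_eq_sub_integral {f f' : ℝ → ℝ} {x : ℝ} (hx : 2 ≤ x)
    (hf : ∀ u ∈ Set.Icc 2 x, HasDerivAt f (f' u) u) (hf' : ContinuousOn f' (Set.Icc 2 x)) :
    ∑ p ∈ (range (⌊x⌋₊ + 1)).filter Nat.Prime, f p =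
      f x * π ⌊x⌋₊ - ∫ u in 2..x, f' u * π ⌊u⌋₊ := by
  have hcount (n : ℕ) : ∑ k ∈ Icc 0 n, (if k.Prime then (1 : ℝ) else 0) = π n := by
    rw [sum_boole, ← Nat.range_succ_eq_Icc_zero, ← Nat.count_eq_card_filter_range]
    rfl
  have hderiv : Set.EqOn (deriv f) f' (Set.Icc 2 x) := fun u hu => (hf u hu).deriv
  have habel := sum_mul_eq_sub_integral_mul₁ (fun k => if k.Prime then (1 : ℝ) else 0)
    (if_neg Nat.not_prime_zero) (if_neg Nat.not_prime_one) x
    (fun u hu => (hf u hu).differentiableAt) (hf'.congr hderiv).integrableOn_Icc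
  simp only [hcount, mul_ite, mul_one, mul_zero] at habel
  rw [sum_filter, Nat.range_succ_eq_Icc_zero, habel, intervalIntegral.integral_of_le hx]
  congr 1
  exact setIntegral_congr_fun measurableSet_Ioc fun u hu =>
    congrArg (· * _) (hderiv (Set.Ioc_subset_Icc_self hu))

lemma intervalIntegrable_mul_primeCounting {f : ℝ → ℝ} {a b : ℝ}
    (hf : ContinuousOn f (Set.uIcc a b)) :
    IntervalIntegrable (fun u => f u * π ⌊u⌋₊) volume a b :=
  (Monotone.intervalIntegrable fun _ _ huv =>
    Nat.cast_le.2 (Nat.monotone_primeCounting (Nat.floor_mono huv))).continuousOn_mul hf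

lemma continuousOn_add_one_rpow_sub (b : ℝ) :
    ContinuousOn (fun u : ℝ => (u + 1) ^ b - u ^ b) (Set.Ioi 0) := by
  have hpos : ∀ u ∈ Set.Ioi (0 : ℝ), u ≠ 0 ∧ u + 1 ≠ 0 := fun u hu =>
    ⟨hu.ne', (add_pos hu one_pos).ne'⟩
  exact (continuousOn_id.add continuousOn_const |>.rpow_const fun u hu => .inl (hpos u hu).2).sub
    (continuousOn_id.rpow_const fun u hu => .inl (hpos u hu).1)

lemma sum_primes_add_one_rpow_sub_eq (γ : ℝ) {x : ℝ} (hx : 2 ≤ x) :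
    ∑ p ∈ (range (⌊x⌋₊ + 1)).filter Nat.Prime, (((p : ℝ) + 1) ^ γ - (p : ℝ) ^ γ) =
      ((x + 1) ^ γ - x ^ γ) * π ⌊x⌋₊ -
        γ * ∫ u in 2..x, ((u + 1) ^ (γ - 1) - u ^ (γ - 1)) * π ⌊u⌋₊ := by
  rw [sum_primes_eq_sub_integral (f := fun u => (u + 1) ^ γ - u ^ γ)
    (f' := fun u => γ * ((u + 1) ^ (γ - 1) - u ^ (γ - 1))) hx (fun u hu => ?_)
    (((continuousOn_add_one_rpow_sub (γ - 1)).mono fun u hu =>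
      two_pos.trans_le hu.1).const_mul γ)]
  · simp only [mul_assoc, intervalIntegral.integral_const_mul]
  · have hu0 : 0 < u := two_pos.trans_le hu.1
    refine ((((hasDerivAt_id u).add_const 1).rpow_const (p := γ) (.inl (by positivity))).sub
      (Real.hasDerivAt_rpow_const (p := γ) (.inl hu0.ne'))).congr_deriv ?_
    simp only [id_eq]
    ring

lemma integral_add_one_rpow_sub_mul_primeCounting_sub_isBigO {γ : ℝ} (hγ : 0 < γ) :
    (fun x => (∫ u in (2 : ℝ)..x, ((u + 1) ^ (γ - 1) - u ^ (γ - 1)) * π ⌊u⌋₊) -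
      (γ - 1) * ∫ u in (2 : ℝ)..x, u ^ (γ - 1) / Real.log u) =O[atTop]
        fun x => x ^ γ / Real.log x ^ 2 := by
  have hint (k : ℕ) {x : ℝ} (hx : 2 ≤ x) := intervalIntegrable_rpow_div_log_pow (γ - 1) k
    one_lt_two (one_lt_two.trans_le hx)
  have hlog {x : ℝ} (hx : 2 ≤ x) : IntervalIntegrable
      (fun u => (γ - 1) * (u ^ (γ - 1) / Real.log u)) volume 2 x := by
    simpa only [pow_one] using (hint 1 hx).const_mul (γ - 1)
  have hpi {x : ℝ} (hx : 2 ≤ x) : IntervalIntegrable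
      (fun u => ((u + 1) ^ (γ - 1) - u ^ (γ - 1)) * π ⌊u⌋₊) volume 2 x :=
    intervalIntegrable_mul_primeCounting ((continuousOn_add_one_rpow_sub (γ - 1)).mono
      fun u hu => two_pos.trans_le (Set.uIcc_of_le hx ▸ hu).1)
  have hnonneg : ∀ᶠ u : ℝ in atTop, 0 ≤ u ^ (γ - 1) / Real.log u ^ 2 := by
    filter_upwards [eventually_ge_atTop 0] with u hu
    positivity
  have hone : (fun _ => (1 : ℝ)) =O[atTop] fun x : ℝ => x ^ γ / Real.log x ^ 2 := by
    simpa only [Real.rpow_zero] using rpow_isBigO_rpow_div_log_pow hγ 2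
  refine (isBigO_intervalIntegral (fun x hx => (hpi hx).sub (hlog hx)) (fun x hx => hint 2 hx)
    hnonneg (add_one_rpow_sub_mul_primeCounting_isBigO (γ - 1))
    (integral_rpow_div_log_pow_isBigO hγ 2) hone).congr' ?_ .rfl
  filter_upwards [eventually_ge_atTop 2] with x hx
  rw [intervalIntegral.integral_sub (hpi hx) (hlog hx), intervalIntegral.integral_const_mul]

lemma sum_primes_add_one_rpow_sub_isBigO {γ : ℝ} (hγ : 0 < γ) :
    (fun x => (∑ p ∈ (range (⌊x⌋₊ + 1)).filter Nat.Prime, (((p : ℝ) + 1) ^ γ - (p : ℝ) ^ γ)) -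
      x ^ γ / Real.log x) =O[atTop] fun x => x ^ γ / Real.log x ^ 2 := by
  refine (((add_one_rpow_sub_mul_primeCounting_isBigO γ).sub
    ((integral_add_one_rpow_sub_mul_primeCounting_sub_isBigO hγ).const_mul_left γ)).sub
    ((integral_rpow_div_log_sub_isBigO hγ).const_mul_left (γ - 1))).congr' ?_ .rfl
  filter_upwards [eventually_ge_atTop 2] with x hx
  rw [sum_primes_add_one_rpow_sub_eq γ hx]
  ring

end PowerDifferences

theorem sum_prime_power_differences_general (γ : ℝ) (hγ : 0 < γ) :
    ∃ C : ℝ, 0 < C ∧ ∃ x₀ : ℝ, ∀ x : ℝ, x₀ ≤ x →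
      |(∑ p ∈ (Finset.range (⌊x⌋₊ + 1)).filter Nat.Prime, (((p : ℝ) + 1) ^ γ - (p : ℝ) ^ γ)) -
          x ^ γ / Real.log x| ≤ C * (x ^ γ / (Real.log x) ^ 2) := by
  obtain ⟨C, hC, hbound⟩ := (sum_primes_add_one_rpow_sub_isBigO hγ).exists_pos
  obtain ⟨x₀, hx₀⟩ := Filter.eventually_atTop.1
    (hbound.bound.and (Filter.eventually_ge_atTop 0))
  refine ⟨C, hC, x₀, fun x hx => (hx₀ x hx).1.trans_eq ?_⟩
  have hx0 := (hx₀ x hx).2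
  rw [Real.norm_of_nonneg (by positivity)]

/-- For `0 < γ < 1`,
`Σ_{p ≤ x} ((p+1)^γ - p^γ) = x^γ/log x + O(x^γ/(log x)²)`. -/
theorem sum_prime_power_differences (γ : ℝ) (hγ1 : 0 < γ) (hγ2 : γ < 1) :
    ∃ C : ℝ, 0 < C ∧ ∃ x₀ : ℝ, ∀ x : ℝ, x₀ ≤ x →
      |(∑ p ∈ (Finset.range (⌊x⌋₊ + 1)).filter Nat.Prime,
          (((p : ℝ) + 1) ^ γ - (p : ℝ) ^ γ)) - x ^ γ / Real.log x| ≤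
        C * (x ^ γ / (Real.log x) ^ 2) :=
  sum_prime_power_differences_general γ hγ1
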